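/- arXiv:2204.05865 — 2 statements merged into one kernel-verified Lean document; each statement's English description precedes it below -/
import Mathlib

section
/- Let F be a 2-factor of a 2-edge-connected cubic signed graph (G,σ). If F contains an even number of negative edges, then there exists a family F of sign-circuits of (G,σ) covering every edge of F, with total length at most (10/9)|E(G)|. -/
open SimpleGraph

variable {V : Type*}

/-- `σ e = true` means the edge `e` is negative. Number of negative edges in `E`. -/
noncomputable def negCount (σ : Sym2 V → Bool) (E : Set (Sym2 V)) : ℕ :=
  (E ∩ {e | σ e = true}).ncard

/-- Number of negative edges in a list of edges (with multiplicity). -/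
def listNegCount (σ : Sym2 V → Bool) (l : List (Sym2 V)) : ℕ :=
  (l.filter fun e => σ e).length

/-- A circuit: a connected `2`-regular subgraph. -/
def IsCircuit (G : SimpleGraph V) (C : G.Subgraph) : Prop :=
  C.Connected ∧ ∀ v ∈ C.verts, (C.neighborSet v).ncard = 2

/-- A balanced circuit: even number of negative edges. -/
def IsBalancedCircuit (G : SimpleGraph V) (σ : Sym2 V → Bool) (C : G.Subgraph) : Prop :=
  IsCircuit G C ∧ Even (negCount σ C.edgeSet)

/-- An unbalanced circuit: odd number of negative edges. -/
def IsUnbalancedCircuit (G : SimpleGraph V) (σ : Sym2 V → Bool) (C : G.Subgraph) : Prop :=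
  IsCircuit G C ∧ Odd (negCount σ C.edgeSet)

/-- `P` is the subgraph of a (possibly trivial) path from `u` to `v`. -/
def IsPathSubgraph (G : SimpleGraph V) (P : G.Subgraph) (u v : V) : Prop :=
  ∃ w : G.Walk u v, w.IsPath ∧ P.verts = {x | x ∈ w.support} ∧
    P.edgeSet = {e | e ∈ w.edges}

/-- A barbell: two unbalanced circuits joined by a (possibly trivial) path
meeting the circuits only at its ends. -/
def IsBarbell (G : SimpleGraph V) (σ : Sym2 V → Bool) (H : G.Subgraph) : Prop :=
  ∃ (C₁ C₂ P : G.Subgraph) (u v : V),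
    IsUnbalancedCircuit G σ C₁ ∧ IsUnbalancedCircuit G σ C₂ ∧
    IsPathSubgraph G P u v ∧ u ∈ C₁.verts ∧ v ∈ C₂.verts ∧
    P.verts ∩ C₁.verts = {u} ∧ P.verts ∩ C₂.verts = {v} ∧
    C₁.verts ∩ C₂.verts ⊆ {u} ∩ {v} ∧
    C₁.edgeSet ∩ C₂.edgeSet = ∅ ∧
    H = C₁ ⊔ C₂ ⊔ P

/-- A sign-circuit: a balanced circuit or a barbell. -/
def IsSignCircuit (G : SimpleGraph V) (σ : Sym2 V → Bool) (H : G.Subgraph) : Prop :=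
  IsBalancedCircuit G σ H ∨ IsBarbell G σ H

/-- Flow-admissible: every edge lies in a sign-circuit (equivalently, the signed
graph admits a nowhere-zero integer flow). -/
def FlowAdmissible (G : SimpleGraph V) (σ : Sym2 V → Bool) : Prop :=
  ∀ e ∈ G.edgeSet, ∃ H : G.Subgraph, IsSignCircuit G σ H ∧ e ∈ H.edgeSet

/-- Total length of a family of subgraphs. -/
noncomputable def coverLength (G : SimpleGraph V) (𝓕 : Multiset G.Subgraph) : ℕ :=
  (𝓕.map fun H => H.edgeSet.ncard).sum

/-- The family `𝓕` covers the edge set `E`. -/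
def Covers (G : SimpleGraph V) (𝓕 : Multiset G.Subgraph) (E : Set (Sym2 V)) : Prop :=
  ∀ e ∈ E, ∃ H ∈ 𝓕, e ∈ H.edgeSet

/-- Cubic graph: every vertex has degree `3`. -/
def IsCubic (G : SimpleGraph V) : Prop := ∀ v : V, (G.neighborSet v).ncard = 3

/-- `2`-edge-connected: connected and bridgeless. -/
def TwoEdgeConnected (G : SimpleGraph V) : Prop :=
  G.Connected ∧ ∀ e, ¬ G.IsBridge e

/-- Balanced signed graph: every circuit has an even number of negative edges. -/
def IsBalancedGraph (G : SimpleGraph V) (σ : Sym2 V → Bool) : Prop :=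
  ∀ C : G.Subgraph, IsCircuit G C → Even (negCount σ C.edgeSet)

/-- A `2`-factor: a spanning `2`-regular subgraph. -/
def IsTwoFactor (G : SimpleGraph V) (F : G.Subgraph) : Prop :=
  F.IsSpanning ∧ ∀ v : V, (F.neighborSet v).ncard = 2

/-- A proper 3-edge-coloring: edges sharing a vertex get different colors. -/
def Proper3EdgeColoring (G : SimpleGraph V) (c : Sym2 V → Fin 3) : Prop :=
  ∀ e ∈ G.edgeSet, ∀ f ∈ G.edgeSet, e ≠ f → (∃ x, x ∈ e ∧ x ∈ f) → c e ≠ c f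

/-- 3-edge-colorable graph. -/
def ThreeEdgeColorable (G : SimpleGraph V) : Prop :=
  ∃ c : Sym2 V → Fin 3, Proper3EdgeColoring G c

/-- `S` is a segment of the circuit `C` determined by a set `Mv` of vertices
(the vertex set of a component `M`): a maximal subpath of `C` whose endpoints
are attachments of `M` and whose internal vertices are not in `M`. -/
def IsSegment (G : SimpleGraph V) (C : G.Subgraph) (Mv : Set V) (S : G.Subgraph) : Prop :=
  ∃ (a b : V) (w : G.Walk a b),
    w.edges ≠ [] ∧ w.support.tail.Nodup ∧
    (∀ e ∈ w.edges, e ∈ C.edgeSet) ∧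
    a ∈ Mv ∧ b ∈ Mv ∧
    (∀ x ∈ w.support, x ∈ Mv → x = a ∨ x = b) ∧
    S.verts = {x | x ∈ w.support} ∧ S.edgeSet = {e | e ∈ w.edges}

theorem SimpleGraph.exists_perm_of_two_regular [Finite V] (H : SimpleGraph V)
    (h : ∀ v, (H.neighborSet v).ncard = 2) :
    ∃ π : Equiv.Perm V, (∀ x, H.Adj x (π x)) ∧ ∀ x, π (π x) ≠ x := by
  classical
  have hne : ∀ v, (H.neighborSet v).Nonempty := fun v =>
    Set.nonempty_of_ncard_ne_zero (by rw [h v]; decide)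
  have hcyc : H.IsCycles := fun v _ => h v
  have hp : ∀ c : H.ConnectedComponent, ∃ (l : ℕ) (f : ℕ → V), 3 ≤ l ∧ f l = f 0 ∧
      (∀ i < l, ∀ j < l, f i = f j → i = j) ∧ (∀ i < l, H.Adj (f i) (f (i + 1))) ∧
      ∀ x ∈ c.supp, ∃ i < l, f i = x := by
    intro c
    obtain ⟨v, hv⟩ := c.nonempty_supp
    obtain ⟨p, hpc, hps⟩ := hcyc.exists_cycle_toSubgraph_verts_eq_connectedComponentSupp hv (hne v)
    have h3 := hpc.three_le_length
    refine ⟨p.length, p.getVert, h3, by simp, fun i hi j hj hij =>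
      hpc.getVert_injOn' (by simp; omega) (by simp; omega) hij,
      fun i hi => p.adj_getVert_succ hi, fun x hx => ?_⟩
    rw [← hps, Walk.mem_verts_toSubgraph] at hx
    obtain ⟨i, hix, hi⟩ := Walk.mem_support_iff_exists_getVert.1 hx
    rcases hi.lt_or_eq with hlt | heq
    · exact ⟨i, hlt, hix⟩
    · exact ⟨0, by omega, by rw [← hix, heq]; simp⟩
  choose l N h3 hN0 hNinj hNadj hNsurj using hp
  have hi : ∀ x, ∃ i < l (H.connectedComponentMk x), N (H.connectedComponentMk x) i = x :=
    fun x => hNsurj _ x rfl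
  choose i hil hix using hi
  let f : V → V := fun x => N (H.connectedComponentMk x) (i x + 1)
  have hf : ∀ x, f x = N (H.connectedComponentMk x) (i x + 1) := fun _ => rfl
  have hadj : ∀ x, H.Adj x (f x) := by
    intro x
    have := hNadj (H.connectedComponentMk x) (i x) (hil x)
    rwa [hix] at this
  have hcomp : ∀ x, H.connectedComponentMk (f x) = H.connectedComponentMk x := fun x =>
    (ConnectedComponent.eq.2 (hadj x).reachable).symm
  have hstep : ∀ x, (i x + 1 < l (H.connectedComponentMk x) ∧ i (f x) = i x + 1) ∨
      (i x + 1 = l (H.connectedComponentMk x) ∧ i (f x) = 0) := by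
    intro x
    have h1 := hil (f x)
    have h2 := hix (f x)
    rw [hcomp] at h1 h2
    rcases Nat.lt_or_ge (i x + 1) (l (H.connectedComponentMk x)) with hlt | hge
    · exact .inl ⟨hlt, hNinj _ _ h1 _ hlt (h2.trans (hf x))⟩
    · have he : i x + 1 = l (H.connectedComponentMk x) := le_antisymm (hil x) hge
      refine .inr ⟨he, hNinj _ _ h1 _ (by omega) (h2.trans ?_)⟩
      rw [hf, he, hN0]
  have hinj : Function.Injective f := by
    intro x y hxy
    have hc : H.connectedComponentMk x = H.connectedComponentMk y := by
      rw [← hcomp x, hxy, hcomp]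
    have h1 := hstep x
    have h2 := hstep y
    have h3 := hix x
    rw [hxy, hc] at h1
    rw [hc, show i x = i y by omega, hix] at h3
    exact h3.symm
  refine ⟨Equiv.ofBijective f (Finite.injective_iff_bijective.1 hinj), hadj, fun x hx => ?_⟩
  change f (f x) = x at hx
  have h1 := hstep x
  have h2 := hstep (f x)
  rw [hx, hcomp] at h2
  have := h3 (H.connectedComponentMk x)
  omega

/-- A cubic graph together with an oriented `2`-factor, given by its successor permutation `succ`,
and the complementary perfect matching, given by the involution `mate`. -/
structure OrientedTwoFactor (G : SimpleGraph V) where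
  succ : Equiv.Perm V
  mate : V → V
  succ_succ_ne : ∀ x, succ (succ x) ≠ x
  mate_mate : ∀ x, mate (mate x) = x
  mate_ne_succ : ∀ x, mate x ≠ succ x
  adj_iff : ∀ x y, G.Adj x y ↔ y = succ x ∨ x = succ y ∨ y = mate x

theorem exists_orientedTwoFactor [Finite V] (G : SimpleGraph V) (hcubic : IsCubic G)
    (F : G.Subgraph) (hF : IsTwoFactor G F) :
    ∃ D : OrientedTwoFactor G, ∀ x y, F.Adj x y ↔ y = D.succ x ∨ x = D.succ y := by
  classical
  obtain ⟨π, hπ, hππ⟩ := F.spanningCoe.exists_perm_of_two_regular (fun v => by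
    rw [← hF.2 v]; rfl)
  have hπ' : ∀ x, F.Adj x (π x) := hπ
  have hns : ∀ x, F.neighborSet x = {π x, π.symm x} := by
    intro x
    symm
    refine Set.eq_of_subset_of_ncard_le ?_ ?_ (Set.toFinite _)
    · rintro y (rfl | rfl)
      · exact hπ' x
      · have := (hπ' (π.symm x)).symm
        rwa [π.apply_symm_apply] at this
    · rw [hF.2, Set.ncard_pair]
      intro he
      exact hππ x (by rw [he, π.apply_symm_apply])
  have hFadj : ∀ x y, F.Adj x y ↔ y = π x ∨ x = π y := by
    intro x y
    rw [← Subgraph.mem_neighborSet, hns, Set.mem_insert_iff, Set.mem_singleton_iff,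
      Equiv.eq_symm_apply, eq_comm (a := π y)]
  have hm : ∀ x, ∃ y, G.neighborSet x \ F.neighborSet x = {y} := by
    intro x
    rw [← Set.ncard_eq_one, Set.ncard_sdiff (F.neighborSet_subset x), hcubic, hF.2]
  choose m hm using hm
  have hm' : ∀ x y, y = m x ↔ G.Adj x y ∧ ¬ F.Adj x y := by
    intro x y
    rw [← Set.mem_singleton_iff, ← hm]
    rfl
  refine ⟨⟨π, m, hππ, fun x => ?_, fun x hx => ?_, fun x y => ?_⟩, hFadj⟩
  · have := (hm' x _).1 rfl
    exact ((hm' _ _).2 ⟨this.1.symm, fun h => this.2 h.symm⟩).symm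
  · exact ((hm' x _).1 hx.symm).2 (hπ' x)
  · rw [← or_assoc, ← hFadj, hm']
    constructor
    · tauto
    · rintro (h | h)
      · exact h.adj_sub
      · exact h.1

lemma ZMod.two_eq_zero_or_one (a : ZMod 2) : a = 0 ∨ a = 1 := by
  revert a; decide

open scoped Classical in
lemma SimpleGraph.exists_ne_odd_degree_reachable [Fintype V] (Y : SimpleGraph V) {u : V}
    (hu : Odd (Y.degree u)) : ∃ v, v ≠ u ∧ Odd (Y.degree v) ∧ Y.Reachable u v := by
  let Z : SimpleGraph V :=
    { Adj := fun a b => Y.Adj a b ∧ Y.Reachable u a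
      symm := ⟨fun a b h => ⟨h.1.symm, h.2.trans h.1.reachable⟩⟩
      loopless := ⟨fun a h => h.1.ne rfl⟩ }
  have hZ : ∀ a, Y.Reachable u a → Z.degree a = Y.degree a := by
    intro a ha
    rw [← card_neighborFinset_eq_degree, ← card_neighborFinset_eq_degree]
    congr 1
    ext b
    simp [Z, ha]
  obtain ⟨v, hvu, hv⟩ := Z.exists_ne_odd_degree_of_exists_odd_degree u (by rwa [hZ u (.refl _)])
  have hr : Y.Reachable u v := by
    have : 0 < Z.degree v := hv.pos
    rw [degree_pos_iff_exists_adj] at this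
    obtain ⟨b, hb⟩ := this
    exact hb.2
  exact ⟨v, hvu, by rwa [← hZ v hr], hr⟩

open scoped Classical in
lemma SimpleGraph.degree_deleteEdges_add_countP [Fintype V] {Y Y' : SimpleGraph V} {u v : V}
    {p : Y.Walk u v} (hp : p.IsTrail) (hY' : Y' = Y.deleteEdges {e | e ∈ p.edges}) (x : V) :
    Y'.degree x + p.edges.countP (fun e => x ∈ e) = Y.degree x := by
  have he : ∀ e, e ∈ Y'.edgeSet ↔ e ∈ Y.edgeSet ∧ e ∉ p.edges := by subst hY'; simp
  rw [← card_incidenceFinset_eq_degree, ← card_incidenceFinset_eq_degree,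
    List.countP_eq_length_filter, ← List.toFinset_card_of_nodup (hp.edges_nodup.filter _),
    ← Finset.card_union_of_disjoint]
  · congr 1
    ext e
    simp only [Finset.mem_union, mem_incidenceFinset, incidenceSet, Set.mem_ofPred_eq,
      he, List.mem_toFinset, List.mem_filter, decide_eq_true_eq]
    have := fun h : e ∈ p.edges => p.edges_subset_edgeSet h
    tauto
  · rw [Finset.disjoint_left]
    intro e
    simp only [mem_incidenceFinset, incidenceSet, Set.mem_ofPred_eq,
      he, List.mem_toFinset, List.mem_filter, decide_eq_true_eq]
    tauto

open scoped Classical in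
lemma SimpleGraph.card_edgeFinset_deleteEdges_add_length [Fintype V] {Y Y' : SimpleGraph V} {u v : V}
    {p : Y.Walk u v} (hp : p.IsTrail) (hY' : Y' = Y.deleteEdges {e | e ∈ p.edges}) :
    Y'.edgeFinset.card + p.length = Y.edgeFinset.card := by
  have he : ∀ e, e ∈ Y'.edgeSet ↔ e ∈ Y.edgeSet ∧ e ∉ p.edges := by subst hY'; simp
  rw [← p.length_edges, ← List.toFinset_card_of_nodup hp.edges_nodup,
    ← Finset.card_union_of_disjoint]
  · congr 1
    ext e
    simp only [Finset.mem_union, mem_edgeFinset, he,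
      List.mem_toFinset]
    have := fun h : e ∈ p.edges => p.edges_subset_edgeSet h
    tauto
  · rw [Finset.disjoint_left]
    intro e
    simp only [mem_edgeFinset, he,
      List.mem_toFinset]
    tauto

lemma coverLength_cons {G : SimpleGraph V} (B : G.Subgraph) (𝓕 : Multiset G.Subgraph) :
    coverLength G (B ::ₘ 𝓕) = B.edgeSet.ncard + coverLength G 𝓕 := by
  simp [coverLength]

lemma coverLength_add {G : SimpleGraph V} (𝓕 𝓕' : Multiset G.Subgraph) :
    coverLength G (𝓕 + 𝓕') = coverLength G 𝓕 + coverLength G 𝓕' := by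
  simp [coverLength]

namespace OrientedTwoFactor

open scoped Classical

variable {G : SimpleGraph V} (D : OrientedTwoFactor G)

lemma adj_succ (x : V) : G.Adj x (D.succ x) := (D.adj_iff _ _).2 (.inl rfl)

lemma adj_mate (x : V) : G.Adj x (D.mate x) := (D.adj_iff _ _).2 (.inr (.inr rfl))

lemma succ_ne (x : V) : D.succ x ≠ x := (D.adj_succ x).ne'

lemma mate_ne (x : V) : D.mate x ≠ x := (D.adj_mate x).ne'

lemma succ_mate_ne (x : V) : D.succ (D.mate x) ≠ x := by
  intro h
  exact D.mate_ne_succ (D.mate x) (by rw [h, D.mate_mate])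

lemma mate_injective : Function.Injective D.mate := fun x y h => by
  rw [← D.mate_mate x, h, D.mate_mate]

/-- The type of circuits of the `2`-factor. -/
def Orbit : Type _ := Quotient (Equiv.Perm.SameCycle.setoid D.succ)

/-- The circuit through a vertex. -/
def orb (x : V) : D.Orbit := Quotient.mk (Equiv.Perm.SameCycle.setoid D.succ) x

noncomputable instance [Finite V] : Fintype D.Orbit :=
  @Fintype.ofFinite _ (inferInstanceAs (Finite (Quotient (Equiv.Perm.SameCycle.setoid D.succ))))

lemma orb_eq_iff {x y : V} : D.orb x = D.orb y ↔ D.succ.SameCycle x y := Quotient.eq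

@[simp] lemma orb_succ (x : V) : D.orb (D.succ x) = D.orb x :=
  D.orb_eq_iff.2 (Equiv.Perm.SameCycle.refl _ _).apply_left

lemma exists_orb (c : D.Orbit) : ∃ x, D.orb x = c := Quotient.exists_rep c

lemma orb_pow (k : ℕ) (x : V) : D.orb ((D.succ ^ k) x) = D.orb x :=
  D.orb_eq_iff.2 ⟨-k, by simp⟩

lemma exists_pow_of_orb_eq [Finite V] {x y : V} (h : D.orb x = D.orb y) :
    ∃ k : ℕ, (D.succ ^ k) x = y := by
  obtain ⟨k, -, hk⟩ := (D.orb_eq_iff.1 h).exists_pow_eq'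
  exact ⟨k, hk⟩

/-- The edge of the `2`-factor leaving a vertex. -/
def edge (x : V) : Sym2 V := s(x, D.succ x)

lemma edge_injective : Function.Injective D.edge := by
  intro x y h
  rcases Sym2.eq_iff.1 h with h | ⟨h1, h2⟩
  · exact h.1
  · exact absurd (by rw [← h1, h2]) (D.succ_succ_ne y)

/-- A circuit of the `2`-factor as a subgraph. -/
def circuit (c : D.Orbit) : G.Subgraph where
  verts := {x | D.orb x = c}
  Adj x y := D.orb x = c ∧ (y = D.succ x ∨ x = D.succ y)
  adj_sub := by
    rintro x y ⟨-, h⟩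
    exact (D.adj_iff x y).2 (by tauto)
  edge_vert h := h.1
  symm := ⟨by
    rintro x y ⟨h, rfl | rfl⟩
    · exact ⟨by simpa using h, .inr rfl⟩
    · exact ⟨by simpa using h, .inl rfl⟩⟩

lemma mem_circuit {c : D.Orbit} {x : V} : x ∈ (D.circuit c).verts ↔ D.orb x = c := Iff.rfl

lemma circuit_edgeSet (c : D.Orbit) : (D.circuit c).edgeSet = D.edge '' {x | D.orb x = c} := by
  ext e
  induction e with | _ x y
  rw [Subgraph.mem_edgeSet]
  constructor
  · rintro ⟨h, rfl | rfl⟩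
    · exact ⟨x, h, rfl⟩
    · exact ⟨y, by simpa using h, Sym2.eq_swap⟩
  · rintro ⟨z, hz, h⟩
    rcases Sym2.eq_iff.1 h with ⟨rfl, rfl⟩ | ⟨rfl, rfl⟩
    · exact ⟨hz, .inl rfl⟩
    · exact ⟨by simpa using hz, .inr rfl⟩

lemma circuit_isCircuit [Finite V] (c : D.Orbit) : IsCircuit G (D.circuit c) := by
  constructor
  · obtain ⟨x, rfl⟩ := D.exists_orb c
    refine Subgraph.connected_iff_forall_exists_walk_subgraph _ |>.2 ⟨⟨x, rfl⟩, ?_⟩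
    have key : ∀ y (hy : D.orb y = D.orb x), ∀ k : ℕ, ∃ p : G.Walk y ((D.succ ^ k) y),
        p.toSubgraph ≤ D.circuit (D.orb x) := by
      intro y hy k
      induction k with
      | zero => exact ⟨.nil, by simpa [mem_circuit] using hy⟩
      | succ k ih =>
        obtain ⟨p, hp⟩ := ih
        have : (D.circuit (D.orb x)).Adj ((D.succ ^ k) y) ((D.succ ^ (k + 1)) y) :=
          ⟨by rw [D.orb_pow, hy], .inl (by rw [pow_succ', Equiv.Perm.mul_apply])⟩
        refine ⟨p.concat this.adj_sub, ?_⟩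
        rw [Walk.concat_eq_append, Walk.toSubgraph_append]
        exact sup_le hp (by simpa using this)
    intro u v hu hv
    obtain ⟨k, rfl⟩ := D.exists_pow_of_orb_eq (hu.trans hv.symm)
    exact key u hu k
  · intro v hv
    have : (D.circuit c).neighborSet v = {D.succ v, D.succ.symm v} := by
      ext y
      simp only [Subgraph.mem_neighborSet, Set.mem_insert_iff, Set.mem_singleton_iff,
        Equiv.eq_symm_apply, eq_comm (a := D.succ y)]
      exact and_iff_right hv
    rw [this, Set.ncard_pair]
    intro he
    exact D.succ_succ_ne v (by rw [he, D.succ.apply_symm_apply])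

lemma circuit_edgeSet_ncard [Fintype V] (c : D.Orbit) :
    (D.circuit c).edgeSet.ncard = (Finset.univ.filter fun x => D.orb x = c).card := by
  rw [circuit_edgeSet, Set.ncard_image_of_injective _ D.edge_injective, ← Set.ncard_coe_finset]
  congr 1
  ext; simp

/-- The sign of the edge leaving a vertex, as an element of `ZMod 2`. -/
def neg (σ : Sym2 V → Bool) (x : V) : ZMod 2 := if σ (D.edge x) then 1 else 0

lemma negCount_image_edge [Fintype V] (σ : Sym2 V → Bool) (p : V → Prop) :
    (negCount σ (D.edge '' {x | p x}) : ZMod 2) = ∑ x with p x, D.neg σ x := by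
  simp only [neg]
  rw [Finset.sum_boole, Finset.filter_filter, negCount, ← Set.ncard_coe_finset,
    ← Set.ncard_image_of_injective _ D.edge_injective]
  congr 2
  ext e
  simp only [Set.mem_inter_iff, Set.mem_image, Finset.coe_filter, Finset.mem_univ, true_and]
  constructor
  · rintro ⟨⟨x, hx, rfl⟩, h⟩
    exact ⟨x, ⟨hx, h⟩, rfl⟩
  · rintro ⟨x, ⟨hx, h⟩, rfl⟩
    exact ⟨⟨x, hx, rfl⟩, h⟩

/-- The parity of the number of negative edges of a circuit. -/
noncomputable def parity [Fintype V] (σ : Sym2 V → Bool) (c : D.Orbit) : ZMod 2 :=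
  ∑ x with D.orb x = c, D.neg σ x

lemma balanced_of_parity_eq_zero [Fintype V] {σ : Sym2 V → Bool} {c : D.Orbit}
    (h : D.parity σ c = 0) : IsBalancedCircuit G σ (D.circuit c) := by
  refine ⟨D.circuit_isCircuit c, ?_⟩
  rw [← ZMod.natCast_eq_zero_iff_even, circuit_edgeSet, negCount_image_edge, ← h, parity]

lemma unbalanced_of_parity_eq_one [Fintype V] {σ : Sym2 V → Bool} {c : D.Orbit}
    (h : D.parity σ c = 1) : IsUnbalancedCircuit G σ (D.circuit c) := by
  refine ⟨D.circuit_isCircuit c, ?_⟩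
  rw [← ZMod.natCast_eq_one_iff_odd, circuit_edgeSet, negCount_image_edge, ← h, parity]

/-- Two unbalanced circuits of the `2`-factor joined by a path form a barbell. -/
lemma exists_barbell_of_isPath [Fintype V] {σ : Sym2 V → Bool} {u v : V}
    (hu : D.parity σ (D.orb u) = 1) (hv : D.parity σ (D.orb v) = 1)
    (huv : D.orb u ≠ D.orb v) (w : G.Walk u v) (hw : w.IsPath)
    (hwu : ∀ x ∈ w.support, D.orb x = D.orb u → x = u)
    (hwv : ∀ x ∈ w.support, D.orb x = D.orb v → x = v) :
    IsSignCircuit G σ (D.circuit (D.orb u) ⊔ D.circuit (D.orb v) ⊔ w.toSubgraph) := by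
  refine .inr ⟨D.circuit (D.orb u), D.circuit (D.orb v), w.toSubgraph, u, v,
    D.unbalanced_of_parity_eq_one hu, D.unbalanced_of_parity_eq_one hv,
    ⟨w, hw, ?_, ?_⟩, rfl, rfl, ?_, ?_, ?_, ?_, rfl⟩
  · ext; simp
  · ext; simp
  · ext x
    simp only [Set.mem_inter_iff, Walk.mem_verts_toSubgraph, mem_circuit, Set.mem_singleton_iff]
    exact ⟨fun h => hwu x h.1 h.2, by rintro rfl; simp⟩
  · ext x
    simp only [Set.mem_inter_iff, Walk.mem_verts_toSubgraph, mem_circuit, Set.mem_singleton_iff]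
    exact ⟨fun h => hwv x h.1 h.2, by rintro rfl; simp⟩
  · rintro x ⟨h1, h2⟩
    exact absurd (h1.symm.trans h2) huv
  · rw [circuit_edgeSet, circuit_edgeSet, ← Set.image_inter D.edge_injective]
    rw [Set.image_eq_empty, Set.eq_empty_iff_forall_notMem]
    rintro x ⟨h1, h2⟩
    exact huv (h1.symm.trans h2)

lemma ncard_edgeSet_barbell_le [Finite V] (c d : D.Orbit) {u v : V} (w : G.Walk u v) :
    (D.circuit c ⊔ D.circuit d ⊔ w.toSubgraph).edgeSet.ncard ≤
      (D.circuit c).edgeSet.ncard + (D.circuit d).edgeSet.ncard + w.length := by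
  rw [Subgraph.edgeSet_sup, Subgraph.edgeSet_sup]
  refine (Set.ncard_union_le _ _).trans (add_le_add (Set.ncard_union_le _ _) ?_)
  have : w.toSubgraph.edgeSet = (w.edges.toFinset : Set (Sym2 V)) := by ext; simp
  rw [this, Set.ncard_coe_finset, ← w.length_edges]
  exact List.toFinset_card_le _

/-- Two unbalanced circuits of the `2`-factor joined by a walk lie in a short barbell. -/
lemma exists_barbell_of_walk [Fintype V] {σ : Sym2 V → Bool} {u v : V}
    (hu : D.parity σ (D.orb u) = 1) (hv : D.parity σ (D.orb v) = 1)
    (huv : D.orb u ≠ D.orb v) (w : G.Walk u v) :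
    ∃ B : G.Subgraph, IsSignCircuit G σ B ∧ D.circuit (D.orb u) ≤ B ∧ D.circuit (D.orb v) ≤ B ∧
      B.edgeSet.ncard ≤ (D.circuit (D.orb u)).edgeSet.ncard +
        (D.circuit (D.orb v)).edgeSet.ncard + w.length := by
  have hex : ∃ n, ∃ (a b : V) (p : G.Walk a b), D.orb a = D.orb u ∧ D.orb b = D.orb v ∧
      p.length = n := ⟨_, u, v, w, rfl, rfl, rfl⟩
  obtain ⟨a, b, p, ha, hb, hp⟩ := Nat.find_spec hex
  have hmin : ∀ (a' b' : V) (q : G.Walk a' b'), D.orb a' = D.orb u → D.orb b' = D.orb v →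
      p.length ≤ q.length := by
    intro a' b' q h1 h2
    rw [hp]
    exact Nat.find_min' hex ⟨a', b', q, h1, h2, rfl⟩
  have hlen : p.bypass.length ≤ p.length := p.length_bypass_le_length
  have hs := D.exists_barbell_of_isPath (σ := σ) (ha ▸ hu) (hb ▸ hv) (by rwa [ha, hb]) p.bypass
    p.bypass_isPath
    (by
      intro x hx hxa
      by_contra hne
      have h1 := hmin _ _ (p.bypass.dropUntil x hx) (hxa.trans ha) hb
      have h2 := congrArg Walk.length (p.bypass.take_spec hx)
      rw [Walk.length_append] at h2
      have h3 : (p.bypass.takeUntil x hx).length ≠ 0 := fun h0 =>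
        hne (Walk.eq_of_length_eq_zero h0).symm
      omega)
    (by
      intro x hx hxb
      by_contra hne
      have h1 := hmin _ _ (p.bypass.takeUntil x hx) ha (hxb.trans hb)
      have h2 := congrArg Walk.length (p.bypass.take_spec hx)
      rw [Walk.length_append] at h2
      have h3 : (p.bypass.dropUntil x hx).length ≠ 0 := fun h0 =>
        hne (Walk.eq_of_length_eq_zero h0)
      omega)
  rw [ha, hb] at hs
  refine ⟨_, hs, le_sup_left.trans le_sup_left, le_sup_right.trans le_sup_left,
    (D.ncard_edgeSet_barbell_le _ _ _).trans ?_⟩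
  have := hmin u v w rfl rfl
  omega

/-- The sum over a circuit of a function on vertices. -/
noncomputable def flux [Fintype V] (j : V → ZMod 2) (c : D.Orbit) : ZMod 2 :=
  ∑ x with D.orb x = c, j x

lemma flux_add [Fintype V] (j k : V → ZMod 2) (c : D.Orbit) :
    D.flux (j + k) c = D.flux j c + D.flux k c := Finset.sum_add_distrib

lemma flux_single [Fintype V] (x : V) (c : D.Orbit) :
    D.flux (Pi.single x 1) c = if D.orb x = c then 1 else 0 := by
  simp [flux]

/-- A walk alternating between circuits and matching edges, the latter restricted to `S`, has an
edge-parity vector with boundary its two ends. -/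
lemma exists_flux_of_walk [Fintype V] {K : SimpleGraph V} {S : V → Prop}
    (hS : ∀ x, S x → S (D.mate x))
    (hK : ∀ x y, K.Adj x y → D.orb x = D.orb y ∨ (y = D.mate x ∧ S x)) {x y : V}
    (w : K.Walk x y) :
    ∃ j : V → ZMod 2, (∀ z, j (D.mate z) = j z) ∧ (∀ z, ¬ S z → j z = 0) ∧
      ∀ c, D.flux j c = (if D.orb x = c then 1 else 0) + if D.orb y = c then 1 else 0 := by
  induction w with
  | nil => exact ⟨0, by simp, by simp, fun c => by rw [CharTwo.add_self_eq_zero]; simp [flux]⟩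
  | @cons x y z h w ih =>
    obtain ⟨j, hj1, hj2, hj3⟩ := ih
    rcases hK _ _ h with h | ⟨rfl, hx⟩
    · exact ⟨j, hj1, hj2, by rwa [h]⟩
    · refine ⟨j + (Pi.single x 1 + Pi.single (D.mate x) 1), fun a => ?_, fun a ha => ?_, fun c => ?_⟩
      · have h1 : D.mate a = x ↔ a = D.mate x :=
          ⟨fun h => by rw [← h, D.mate_mate], fun h => by rw [h, D.mate_mate]⟩
        simp only [Pi.add_apply, hj1, Pi.single_apply, h1, D.mate_injective.eq_iff]
        ring
      · have h1 : a ≠ x := by rintro rfl; exact ha hx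
        have h2 : a ≠ D.mate x := by rintro rfl; exact ha (hS _ hx)
        simp [hj2 a ha, h1, h2]
      · rw [flux_add, flux_add, flux_single, flux_single, hj3]
        have := CharTwo.add_self_eq_zero (if D.orb (D.mate x) = c then 1 else 0 : ZMod 2)
        linear_combination this

/-- A set of matching edges, given by its indicator on vertices, which meets every circuit of the
`2`-factor with the parity of its number of negative edges. -/
structure IsJoin [Fintype V] (σ : Sym2 V → Bool) (j : V → ZMod 2) : Prop where
  mate : ∀ x, j (D.mate x) = j x
  flux : ∀ c, D.flux j c = D.parity σ c

lemma exists_isJoin [Fintype V] (hG : G.Connected) (σ : Sym2 V → Bool)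
    (hσ : ∑ x, D.neg σ x = 0) : ∃ j, D.IsJoin σ j := by
  obtain ⟨r⟩ := hG.nonempty
  have h : ∀ x, ∃ j : V → ZMod 2, (∀ z, j (D.mate z) = j z) ∧
      ∀ c, D.flux j c = (if D.orb x = c then 1 else 0) + if D.orb r = c then 1 else 0 := by
    intro x
    obtain ⟨w⟩ := hG.preconnected x r
    obtain ⟨j, h1, -, h2⟩ := D.exists_flux_of_walk (S := fun _ => True) (fun _ h => h) (by
      intro x y hxy
      rcases (D.adj_iff x y).1 hxy with rfl | rfl | rfl <;> simp) w
    exact ⟨j, h1, h2⟩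
  choose j hj1 hj2 using h
  refine ⟨fun z => ∑ x, D.neg σ x * j x z, fun z => ?_, fun c => ?_⟩
  · simp [hj1]
  · have : D.flux (fun z => ∑ x, D.neg σ x * j x z) c = ∑ x, D.neg σ x * D.flux (j x) c := by
      simp only [OrientedTwoFactor.flux, Finset.mul_sum]
      exact Finset.sum_comm
    rw [this]
    simp only [hj2, mul_add, Finset.sum_add_distrib, ← Finset.sum_mul, hσ, zero_mul, add_zero]
    simp [parity, Finset.sum_filter]

lemma exists_cycle_vector [Fintype V] (hG : ∀ e, ¬ G.IsBridge e) (x : V) :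
    ∃ z : V → ZMod 2, (∀ y, z (D.mate y) = z y) ∧ (∀ c, D.flux z c = 0) ∧ z x = 1 := by
  have h := hG s(x, D.mate x)
  rw [isBridge_iff, not_not] at h
  obtain ⟨w⟩ := h
  obtain ⟨j, h1, h2, h3⟩ := D.exists_flux_of_walk (S := fun y => y ≠ x ∧ y ≠ D.mate x)
    (fun y h => ⟨fun h' => h.2 (by rw [← h', D.mate_mate]), fun h' => h.1 (D.mate_injective h')⟩)
    (by
      intro y z hyz
      rw [deleteEdges_adj] at hyz
      rcases (D.adj_iff y z).1 hyz.1 with rfl | rfl | rfl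
      · simp
      · simp
      · refine .inr ⟨rfl, ?_, ?_⟩
        · rintro rfl; simp at hyz
        · rintro rfl; simp [D.mate_mate] at hyz) w
  refine ⟨j + (Pi.single x 1 + Pi.single (D.mate x) 1), fun a => ?_, fun c => ?_, ?_⟩
  · have h1' : D.mate a = x ↔ a = D.mate x :=
      ⟨fun h => by rw [← h, D.mate_mate], fun h => by rw [h, D.mate_mate]⟩
    simp only [Pi.add_apply, h1, Pi.single_apply, h1', D.mate_injective.eq_iff]
    ring
  · rw [flux_add, flux_add, flux_single, flux_single, h3]
    exact CharTwo.add_self_eq_zero _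
  · simp [h2, (D.mate_ne x).symm]

/-- The number of vertices in the support of a vector. -/
noncomputable def size [Fintype V] (j : V → ZMod 2) : ℕ := (Finset.univ.filter fun x => j x = 1).card

/-- A smallest join in a bridgeless graph has at most half of the matching edges. -/
lemma exists_min_isJoin [Fintype V] (hG : TwoEdgeConnected G) (σ : Sym2 V → Bool)
    (hσ : ∑ x, D.neg σ x = 0) :
    ∃ j, D.IsJoin σ j ∧ (∀ k, D.IsJoin σ k → size j ≤ size k) ∧ 2 * size j ≤ Fintype.card V := by
  let 𝒥 : Finset (V → ZMod 2) := Finset.univ.filter (D.IsJoin σ)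
  have hne : 𝒥.Nonempty := by
    obtain ⟨j, hj⟩ := D.exists_isJoin hG.1 σ hσ
    exact ⟨j, by simpa [𝒥] using hj⟩
  obtain ⟨j, hj, hmin⟩ := Finset.exists_min_image 𝒥 size hne
  refine ⟨j, by simpa [𝒥] using hj, fun k hk => hmin k (by simpa [𝒥] using hk), ?_⟩
  have hhalf : ∀ x, 2 * (𝒥.filter fun k => k x = 1).card = 𝒥.card := by
    intro x
    obtain ⟨z, hz1, hz2, hz3⟩ := D.exists_cycle_vector hG.2 x
    have hzJ : ∀ k ∈ 𝒥, k + z ∈ 𝒥 := by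
      intro k hk
      simp only [𝒥, Finset.mem_filter, Finset.mem_univ, true_and] at hk ⊢
      exact ⟨fun y => by simp [hk.mate, hz1], fun c => by rw [flux_add, hk.flux, hz2, add_zero]⟩
    have hzz : ∀ k : V → ZMod 2, k + z + z = k := fun k => by
      ext y
      rw [Pi.add_apply, Pi.add_apply, add_assoc, CharTwo.add_self_eq_zero, add_zero]
    have : (𝒥.filter fun k => k x = 1).card = (𝒥.filter fun k => ¬ k x = 1).card := by
      refine Finset.card_bij' (fun k _ => k + z) (fun k _ => k + z) ?_ ?_
        (fun k _ => hzz k) (fun k _ => hzz k)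
      · intro k hk
        rw [Finset.mem_filter] at hk ⊢
        refine ⟨hzJ k hk.1, ?_⟩
        rw [Pi.add_apply, hk.2, hz3]
        decide
      · intro k hk
        rw [Finset.mem_filter] at hk ⊢
        refine ⟨hzJ k hk.1, ?_⟩
        rw [Pi.add_apply, (ZMod.two_eq_zero_or_one (k x)).resolve_right hk.2, hz3, zero_add]
    have h2 := Finset.card_filter_add_card_filter_not (s := 𝒥) (fun k => k x = 1)
    omega
  have hsum : ∑ k ∈ 𝒥, size k = ∑ x, (𝒥.filter fun k => k x = 1).card := by
    simp only [size, Finset.card_filter]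
    exact Finset.sum_comm
  have h1 : 𝒥.card * size j ≤ ∑ k ∈ 𝒥, size k := by
    rw [← smul_eq_mul]
    exact Finset.card_nsmul_le_sum _ _ _ hmin
  have h2 : 2 * ∑ k ∈ 𝒥, size k = Fintype.card V * 𝒥.card := by
    rw [hsum, Finset.mul_sum]
    simp [hhalf]
  have h3 : 0 < 𝒥.card := hne.card_pos
  nlinarith

/-- Every edge of a smallest join separates the circuits. -/
lemma exists_cut [Fintype V] {σ : Sym2 V → Bool} {j : V → ZMod 2} (hj : D.IsJoin σ j)
    (hmin : ∀ k, D.IsJoin σ k → size j ≤ size k) {x : V} (hx : j x = 1) :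
    ∃ s : D.Orbit → Prop, s (D.orb x) ∧ ¬ s (D.orb (D.mate x)) ∧
      ∀ y, j y = 1 → y ≠ x → y ≠ D.mate x → (s (D.orb y) ↔ s (D.orb (D.mate y))) := by
  let S : V → Prop := fun y => j y = 1 ∧ y ≠ x ∧ y ≠ D.mate x
  have hS : ∀ y, S y → S (D.mate y) := fun y h => ⟨by rw [hj.mate]; exact h.1,
    fun h' => h.2.2 (by rw [← h', D.mate_mate]), fun h' => h.2.1 (D.mate_injective h')⟩
  let K : SimpleGraph V := SimpleGraph.fromRel fun a b => D.orb a = D.orb b ∨ (b = D.mate a ∧ S a)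
  have hK : ∀ a b, K.Adj a b → D.orb a = D.orb b ∨ (b = D.mate a ∧ S a) := by
    intro a b h
    rw [SimpleGraph.fromRel_adj] at h
    rcases h.2 with h | (h | ⟨rfl, hb⟩)
    · exact h
    · exact .inl h.symm
    · exact .inr ⟨(D.mate_mate b).symm, hS b hb⟩
  have hK' : ∀ a b, D.orb a = D.orb b ∨ (b = D.mate a ∧ S a) → K.Reachable a b := by
    intro a b h
    by_cases hab : a = b
    · rw [hab]
    · exact SimpleGraph.Adj.reachable (by rw [SimpleGraph.fromRel_adj]; exact ⟨hab, .inl h⟩)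
  have hs : ∀ y, (∃ z, D.orb z = D.orb y ∧ K.Reachable x z) ↔ K.Reachable x y :=
    fun y => ⟨fun ⟨z, h1, h2⟩ => h2.trans (hK' _ _ (.inl h1)), fun h => ⟨y, rfl, h⟩⟩
  refine ⟨fun c => ∃ z, D.orb z = c ∧ K.Reachable x z, ?_, ?_, fun y h1 h2 h3 => ?_⟩
  · exact ⟨x, rfl, .refl _⟩
  · beta_reduce
    rw [hs]
    rintro ⟨w⟩
    obtain ⟨k, h1, h2, h3⟩ := D.exists_flux_of_walk hS hK w
    have hjoin : D.IsJoin σ (j + (k + (Pi.single x 1 + Pi.single (D.mate x) 1))) := by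
      refine ⟨fun a => ?_, fun c => ?_⟩
      · have h1' : D.mate a = x ↔ a = D.mate x :=
          ⟨fun h => by rw [← h, D.mate_mate], fun h => by rw [h, D.mate_mate]⟩
        simp only [Pi.add_apply, h1, hj.mate, Pi.single_apply, h1', D.mate_injective.eq_iff]
        ring
      · rw [flux_add, flux_add, flux_add, flux_single, flux_single, h3, hj.flux,
          CharTwo.add_self_eq_zero, add_zero]
    refine (hmin _ hjoin).not_gt (Finset.card_lt_card ?_)
    rw [Finset.ssubset_iff_of_subset]
    · refine ⟨x, by simpa using hx, ?_⟩
      have : k x = 0 := h2 x (by simp [S])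
      simp [hx, this, (D.mate_ne x).symm]
    · intro a ha
      rw [Finset.mem_filter] at ha ⊢
      refine ⟨ha.1, ?_⟩
      by_contra hja
      have h4 : k a = 0 := h2 a (fun h => hja h.1)
      have h5 : a ≠ x := by rintro rfl; exact hja hx
      have h6 : a ≠ D.mate x := by rintro rfl; exact hja (by rw [hj.mate, hx])
      exact hja (by simpa [h4, h5, h6] using ha.2)
  · beta_reduce
    rw [hs, hs]
    have h := hK' y (D.mate y) (.inr ⟨rfl, h1, h2, h3⟩)
    exact ⟨fun h' => h'.trans h, fun h' => h'.trans h.symm⟩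

/-- If a subgraph has at most one odd vertex on each circuit, and only on unbalanced ones, then
the circuits of its odd vertices are covered by barbells using the subgraph for their paths. -/
lemma exists_family_of_odd_degree [Fintype V] {σ : Sym2 V → Bool} (n : ℕ) (Y : SimpleGraph V)
    (hn : Y.edgeFinset.card ≤ n) (hY : Y ≤ G)
    (hpar : ∀ x, Odd (Y.degree x) → D.parity σ (D.orb x) = 1)
    (hinj : ∀ x y, Odd (Y.degree x) → Odd (Y.degree y) → D.orb x = D.orb y → x = y) :
    ∃ 𝓕 : Multiset G.Subgraph, (∀ H ∈ 𝓕, IsSignCircuit G σ H) ∧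
      (∀ x, Odd (Y.degree x) → ∃ H ∈ 𝓕, D.circuit (D.orb x) ≤ H) ∧
      coverLength G 𝓕 ≤ Y.edgeFinset.card +
        ∑ x with Odd (Y.degree x), (D.circuit (D.orb x)).edgeSet.ncard := by
  induction n generalizing Y with
  | zero =>
    refine ⟨0, by simp, fun x hx => ?_, by simp [coverLength]⟩
    have h := hx.pos
    rw [degree_pos_iff_exists_adj] at h
    obtain ⟨b, hb⟩ := h
    have : s(x, b) ∈ Y.edgeFinset := by simpa using hb
    rw [Finset.card_eq_zero.1 (Nat.le_zero.1 hn)] at this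
    simp at this
  | succ n ih =>
    by_cases hodd : ∃ u, Odd (Y.degree u)
    swap
    · push Not at hodd
      exact ⟨0, by simp, fun x hx => absurd hx (by simpa using hodd x), by simp [coverLength]⟩
    obtain ⟨u, hu⟩ := hodd
    obtain ⟨v, hvu, hv, ⟨w⟩⟩ := Y.exists_ne_odd_degree_reachable hu
    have hp : w.bypass.IsTrail := w.bypass_isPath.isTrail
    generalize w.bypass = p at hp
    obtain ⟨Y', hY'⟩ : ∃ Y', Y' = Y.deleteEdges {e | e ∈ p.edges} := ⟨_, rfl⟩
    have hcard := card_edgeFinset_deleteEdges_add_length hp hY'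
    have hdeg : ∀ x, Odd (Y'.degree x) ↔ Odd (Y.degree x) ∧ x ≠ u ∧ x ≠ v := by
      intro x
      have h1 := degree_deleteEdges_add_countP hp hY' x
      have h2 := hp.even_countP_edges_iff x
      have h3 : Odd (Y.degree x) ↔ (Odd (Y'.degree x) ↔ Even (p.edges.countP fun e => x ∈ e)) := by
        rw [← h1, Nat.odd_add]
      by_cases hxu : x = u
      · subst hxu
        have h4 : ¬ Even (p.edges.countP fun e => x ∈ e) := by rw [h2]; simp [hvu.symm]
        tauto
      by_cases hxv : x = v
      · subst hxv
        have h4 : ¬ Even (p.edges.countP fun e => x ∈ e) := by rw [h2]; simp [hvu.symm]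
        tauto
      have h4 : Even (p.edges.countP fun e => x ∈ e) := by rw [h2]; simp [hxu, hxv]
      tauto
    have hlen : p.length ≠ 0 := fun h => hvu (Walk.eq_of_length_eq_zero h).symm
    obtain ⟨𝓕, h𝓕1, h𝓕2, h𝓕3⟩ := ih Y' (by omega) (hY' ▸ (Y.deleteEdges_le _).trans hY)
      (fun x hx => hpar x ((hdeg x).1 hx).1)
      (fun x y hx hy => hinj x y ((hdeg x).1 hx).1 ((hdeg y).1 hy).1)
    obtain ⟨B, hB1, hB2, hB3, hB4⟩ := D.exists_barbell_of_walk (hpar u hu) (hpar v hv)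
      (fun h => hvu (hinj v u hv hu h.symm)) (p.mapLe hY)
    refine ⟨B ::ₘ 𝓕, ?_, fun x hx => ?_, ?_⟩
    · simpa using ⟨hB1, h𝓕1⟩
    · by_cases hxu : x = u
      · exact ⟨B, by simp, hxu ▸ hB2⟩
      by_cases hxv : x = v
      · exact ⟨B, by simp, hxv ▸ hB3⟩
      obtain ⟨H, hH1, hH2⟩ := h𝓕2 x ((hdeg x).2 ⟨hx, hxu, hxv⟩)
      exact ⟨H, by simp [hH1], hH2⟩
    · have hset : (Finset.univ.filter fun x => Odd (Y.degree x)) =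
          insert u (insert v (Finset.univ.filter fun x => Odd (Y'.degree x))) := by
        ext x
        simp only [Finset.mem_filter, Finset.mem_univ, true_and, Finset.mem_insert, hdeg]
        constructor
        · tauto
        · rintro (rfl | rfl | h)
          exacts [hu, hv, h.1]
      rw [coverLength_cons, hset, Finset.sum_insert (by simp [hdeg, hvu.symm]),
        Finset.sum_insert (by simp [hdeg])]
      simp only [Walk.length_map, Walk.mapLe] at hB4
      omega

lemma exists_circuit_vector [Fintype V] (q : V → ZMod 2) (hq : ∀ c, D.flux q c = 0) :
    ∃ ξ : V → ZMod 2, ∀ x, ξ x + ξ (D.succ.symm x) = q x := by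
  choose r hr using D.exists_orb
  have h : ∀ x, ∃ ξ : V → ZMod 2, ∀ y, ξ y + ξ (D.succ.symm y) =
      (Pi.single x 1 + Pi.single (r (D.orb x)) 1 : V → ZMod 2) y := by
    intro x
    obtain ⟨k, hk⟩ := D.exists_pow_of_orb_eq (hr (D.orb x)).symm
    rw [← hk]
    clear hk
    induction k with
    | zero =>
      exact ⟨0, fun y => by simp [CharTwo.add_self_eq_zero]⟩
    | succ k ih =>
      obtain ⟨ξ, hξ⟩ := ih
      refine ⟨ξ + Pi.single ((D.succ ^ k) x) 1, fun y => ?_⟩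
      have h1 := hξ y
      have h2 : D.succ.symm y = (D.succ ^ k) x ↔ y = D.succ ((D.succ ^ k) x) := Equiv.symm_apply_eq _
      simp only [Pi.add_apply, Pi.single_apply, h2, pow_succ', Equiv.Perm.mul_apply] at h1 ⊢
      have h3 := CharTwo.add_self_eq_zero (if y = (D.succ ^ k) x then 1 else 0 : ZMod 2)
      linear_combination h1 + h3
  choose ξ hξ using h
  refine ⟨fun y => ∑ x, q x * ξ x y, fun y => ?_⟩
  simp only [← Finset.sum_add_distrib, ← mul_add, hξ]
  simp only [Pi.add_apply, mul_add, Finset.sum_add_distrib]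
  have h1 : ∑ x, q x * (Pi.single x 1 : V → ZMod 2) y = q y := by
    simp [Pi.single_apply]
  have h2 : ∑ x, q x * (Pi.single (r (D.orb x)) 1 : V → ZMod 2) y = 0 := by
    by_cases hy : y = r (D.orb y)
    · rw [← hq (D.orb y), flux, Finset.sum_filter]
      refine Finset.sum_congr rfl fun x _ => ?_
      have : y = r (D.orb x) ↔ D.orb x = D.orb y :=
        ⟨fun h => by rw [h, hr], fun h => by rw [h]; exact hy⟩
      simp [Pi.single_apply, this]
    · refine Finset.sum_eq_zero fun x _ => ?_
      have : y ≠ r (D.orb x) := fun h => hy (by rw [h, hr])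
      simp [this]
  rw [h1, h2, add_zero]

lemma exists_small_circuit_vector [Fintype V] (q : V → ZMod 2) (hq : ∀ c, D.flux q c = 0) :
    ∃ ξ : V → ZMod 2, (∀ x, ξ x + ξ (D.succ.symm x) = q x) ∧ ∀ c,
      2 * (Finset.univ.filter fun x => D.orb x = c ∧ ξ x = 1).card ≤
        (Finset.univ.filter fun x => D.orb x = c).card ∧
      ((∀ x, D.orb x = c → q x = 0) → ∀ x, D.orb x = c → ξ x = 0) := by
  obtain ⟨ξ, hξ⟩ := D.exists_circuit_vector q hq
  have h : ∀ c : D.Orbit, ∃ a : ZMod 2,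
      2 * (Finset.univ.filter fun x => D.orb x = c ∧ ξ x + a = 1).card ≤
        (Finset.univ.filter fun x => D.orb x = c).card ∧
      ((∀ x, D.orb x = c → q x = 0) → ∀ x, D.orb x = c → ξ x + a = 0) := by
    intro c
    by_cases hc : ∀ x, D.orb x = c → q x = 0
    · obtain ⟨r, rfl⟩ := D.exists_orb c
      have hconst : ∀ x, D.orb x = D.orb r → ξ x + ξ r = 0 := by
        intro x hx
        obtain ⟨k, rfl⟩ := D.exists_pow_of_orb_eq hx.symm
        clear hx
        induction k with
        | zero => simp [CharTwo.add_self_eq_zero]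
        | succ k ih =>
          have h1 := hξ ((D.succ ^ (k + 1)) r)
          rw [hc _ (D.orb_pow _ _)] at h1
          rw [pow_succ', Equiv.Perm.mul_apply, Equiv.symm_apply_apply] at h1
          rw [pow_succ', Equiv.Perm.mul_apply]
          have h3 := CharTwo.add_self_eq_zero (ξ ((D.succ ^ k) r))
          linear_combination h1 + ih - h3
      refine ⟨ξ r, ?_, fun _ => hconst⟩
      rw [Finset.card_eq_zero.2]
      · simp
      · rw [Finset.filter_eq_empty_iff]
        rintro x - ⟨hx, h1⟩
        rw [hconst x hx] at h1
        exact zero_ne_one h1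
    · have hsum : (Finset.univ.filter fun x => D.orb x = c ∧ ξ x + 0 = 1).card +
          (Finset.univ.filter fun x => D.orb x = c ∧ ξ x + 1 = 1).card =
          (Finset.univ.filter fun x => D.orb x = c).card := by
        rw [← Finset.card_filter_add_card_filter_not (s := Finset.univ.filter fun x => D.orb x = c)
          (fun x => ξ x = 1), Finset.filter_filter, Finset.filter_filter]
        congr 2
        · simp
        · ext x
          rcases ZMod.two_eq_zero_or_one (ξ x) with h | h <;> simp [h]
      rcases le_total (Finset.univ.filter fun x => D.orb x = c ∧ ξ x + 0 = 1).card
          (Finset.univ.filter fun x => D.orb x = c ∧ ξ x + 1 = 1).card with h | h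
      · exact ⟨0, by omega, fun h => absurd h hc⟩
      · exact ⟨1, by omega, fun h => absurd h hc⟩
  choose a ha using h
  refine ⟨fun x => ξ x + a (D.orb x), fun x => ?_, fun c => ⟨?_, fun hq x hx => ?_⟩⟩
  · have h1 : D.orb (D.succ.symm x) = D.orb x := by
      rw [← D.orb_succ, Equiv.apply_symm_apply]
    have h2 := CharTwo.add_self_eq_zero (a (D.orb x))
    beta_reduce
    rw [h1]
    linear_combination hξ x + h2
  · refine le_trans (le_of_eq ?_) (ha c).1
    congr 2
    ext x
    simp only [Finset.mem_filter, Finset.mem_univ, true_and]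
    exact and_congr_right fun h => by rw [h]
  · subst hx
    exact (ha _).2 hq x rfl

/-- A circuit met exactly once by a join. -/
def IsEnd (j : V → ZMod 2) (c : D.Orbit) : Prop :=
  ∃ x, (D.orb x = c ∧ j x = 1) ∧ ∀ y, D.orb y = c → j y = 1 → y = x

/-- A circuit not met by a join. -/
def IsFree (j : V → ZMod 2) (c : D.Orbit) : Prop := ∀ x, D.orb x = c → j x = 0

/-- A circuit met at least twice by a join. -/
def IsInner (j : V → ZMod 2) (c : D.Orbit) : Prop := ¬ D.IsEnd j c ∧ ¬ D.IsFree j c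

lemma IsEnd.parity_eq_one [Fintype V] {σ : Sym2 V → Bool} {j : V → ZMod 2} (hj : D.IsJoin σ j)
    {c : D.Orbit} (hc : D.IsEnd j c) : D.parity σ c = 1 := by
  obtain ⟨x, ⟨hx, hjx⟩, h⟩ := hc
  rw [← hj.flux, OrientedTwoFactor.flux, Finset.sum_eq_single x, hjx]
  · intro y hy hyx
    refine (ZMod.two_eq_zero_or_one (j y)).resolve_right fun h1 => hyx (h y ?_ h1)
    simpa using hy
  · intro h'
    exact absurd hx (by simpa using h')

lemma IsFree.parity_eq_zero [Fintype V] {σ : Sym2 V → Bool} {j : V → ZMod 2} (hj : D.IsJoin σ j)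
    {c : D.Orbit} (hc : D.IsFree j c) : D.parity σ c = 0 := by
  rw [← hj.flux, OrientedTwoFactor.flux]
  exact Finset.sum_eq_zero fun x hx => hc x (by simpa using hx)

lemma card_filter_eq_sum_orbit [Fintype V] (p : V → Prop) [DecidablePred p] :
    (Finset.univ.filter p).card =
      ∑ c : D.Orbit, (Finset.univ.filter fun x => D.orb x = c ∧ p x).card := by
  rw [Finset.card_eq_sum_card_fiberwise (f := D.orb) (t := Finset.univ) (by simp)]
  refine Finset.sum_congr rfl fun c _ => ?_
  rw [Finset.filter_filter]
  simp only [and_comm]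

/-- The subgraph formed by selected circuit edges and selected matching edges. -/
def selection (ξ j : V → ZMod 2) (hj : ∀ x, j (D.mate x) = j x) : SimpleGraph V where
  Adj x y := (y = D.succ x ∧ ξ x = 1) ∨ (x = D.succ y ∧ ξ y = 1) ∨ (y = D.mate x ∧ j x = 1)
  symm := ⟨by
    rintro x y (h | h | ⟨rfl, h⟩)
    · exact .inr (.inl h)
    · exact .inl h
    · exact .inr (.inr ⟨(D.mate_mate x).symm, by rw [hj, h]⟩)⟩
  loopless := ⟨by
    rintro x (h | h | h)
    · exact D.succ_ne x h.1.symm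
    · exact D.succ_ne x h.1.symm
    · exact D.mate_ne x h.1.symm⟩

lemma selection_le (ξ j : V → ZMod 2) (hj : ∀ x, j (D.mate x) = j x) : D.selection ξ j hj ≤ G := by
  intro x y h
  rw [D.adj_iff]
  rcases h with h | h | h <;> tauto

lemma degree_selection [Fintype V] (ξ j : V → ZMod 2) (hj : ∀ x, j (D.mate x) = j x) (x : V) :
    (D.selection ξ j hj).degree x = (if ξ x = 1 then 1 else 0) +
      (if ξ (D.succ.symm x) = 1 then 1 else 0) + (if j x = 1 then 1 else 0) := by
  have h1 : D.succ x ≠ D.succ.symm x := fun h =>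
    D.succ_succ_ne x (by rw [h, Equiv.apply_symm_apply])
  have h2 : D.mate x ≠ D.succ.symm x := fun h =>
    D.succ_mate_ne x (by rw [h, Equiv.apply_symm_apply])
  have h3 := D.mate_ne_succ x
  have : (D.selection ξ j hj).neighborFinset x =
      ((if ξ x = 1 then {D.succ x} else ∅) ∪ (if ξ (D.succ.symm x) = 1 then {D.succ.symm x} else ∅)) ∪
        (if j x = 1 then {D.mate x} else ∅) := by
    ext y
    have h4 : x = D.succ y ↔ y = D.succ.symm x := by rw [Equiv.eq_symm_apply, eq_comm]
    rw [mem_neighborFinset]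
    simp only [selection, h4]
    split_ifs <;> simp_all
    all_goals grind
  rw [← card_neighborFinset_eq_degree, this, Finset.card_union_of_disjoint,
    Finset.card_union_of_disjoint]
  · congr 1
    · congr 1 <;> split_ifs <;> simp
    · split_ifs <;> simp
  · split_ifs <;> simp [h1]
  · split_ifs <;> simp [h2.symm, h3.symm, h2, h3]

lemma two_mul_card_edgeFinset_selection [Fintype V] (ξ j : V → ZMod 2)
    (hj : ∀ x, j (D.mate x) = j x) :
    2 * (D.selection ξ j hj).edgeFinset.card = 2 * size ξ + size j := by
  rw [← sum_degrees_eq_twice_card_edges]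
  simp only [degree_selection, Finset.sum_add_distrib, size, Finset.card_filter]
  rw [Equiv.sum_comp D.succ.symm (fun x => if ξ x = 1 then 1 else 0)]
  ring

/-- Covering every circuit once by itself or by a barbell. -/
lemma exists_family_single [Fintype V] {σ : Sym2 V → Bool} {j : V → ZMod 2} (hj : D.IsJoin σ j) :
    ∃ 𝓕 : Multiset G.Subgraph, (∀ H ∈ 𝓕, IsSignCircuit G σ H) ∧
      (∀ c, ∃ H ∈ 𝓕, D.circuit c ≤ H) ∧
      2 * coverLength G 𝓕 ≤ 2 * Fintype.card V + size j +
        (Finset.univ.filter fun x => D.IsInner j (D.orb x)).card := by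
  have hr : ∀ c : D.Orbit, ∃ x, D.orb x = c ∧
      (D.IsEnd j c → j x = 1 ∧ ∀ y, D.orb y = c → j y = 1 → y = x) := by
    intro c
    by_cases hc : D.IsEnd j c
    · obtain ⟨x, ⟨hx, hjx⟩, h⟩ := hc
      exact ⟨x, hx, fun _ => ⟨hjx, h⟩⟩
    · obtain ⟨x, hx⟩ := D.exists_orb c
      exact ⟨x, hx, fun h => absurd h hc⟩
  choose r hr hrend using hr
  let t : V → ZMod 2 := fun x => if x = r (D.orb x) then D.parity σ (D.orb x) else 0
  have ht : ∀ c, D.flux t c = D.parity σ c := by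
    intro c
    rw [flux, Finset.sum_eq_single (r c)]
    · simp [t, hr]
    · intro x hx hne
      obtain rfl : D.orb x = c := by simpa using hx
      simp [t, hne]
    · intro h
      exact absurd (hr c) (by simpa using h)
  obtain ⟨ξ, hξ, hsmall⟩ := D.exists_small_circuit_vector (j + t) (fun c => by
    rw [flux_add, hj.flux, ht, CharTwo.add_self_eq_zero])
  have hsize : 2 * size ξ ≤ (Finset.univ.filter fun x => D.IsInner j (D.orb x)).card := by
    rw [size, D.card_filter_eq_sum_orbit (fun x => ξ x = 1),
      D.card_filter_eq_sum_orbit (fun x => D.IsInner j (D.orb x)), Finset.mul_sum]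
    refine Finset.sum_le_sum fun c _ => ?_
    by_cases hc : D.IsInner j c
    · refine (hsmall c).1.trans (le_of_eq ?_)
      congr 1
      ext x
      simp only [Finset.mem_filter, Finset.mem_univ, true_and]
      exact ⟨fun h => ⟨h, h ▸ hc⟩, fun h => h.1⟩
    · have h0 : ∀ x, D.orb x = c → ξ x = 0 := by
        refine (hsmall c).2 fun x hx => ?_
        subst hx
        by_cases he : D.IsEnd j (D.orb x)
        · by_cases hx : x = r (D.orb x)
          · have h1 : j x = 1 := by
              rw [hx]
              exact (hrend _ he).1
            have h2 := IsEnd.parity_eq_one D hj he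
            simp only [Pi.add_apply, h1, t, ← hx, h2, if_true]
            decide
          · have h1 : j x = 0 := (ZMod.two_eq_zero_or_one _).resolve_right fun h =>
              hx ((hrend _ he).2 x rfl h)
            simp [h1, t, hx]
        · have hf : D.IsFree j (D.orb x) := by
            by_contra hf
            exact hc ⟨he, hf⟩
          simp [hf x rfl, t, IsFree.parity_eq_zero D hj hf]
      rw [Finset.card_eq_zero.2]
      · simp
      · rw [Finset.filter_eq_empty_iff]
        rintro x - ⟨hx, h1⟩
        rw [h0 x hx] at h1
        exact zero_ne_one h1
  have hodd : ∀ x, Odd ((D.selection ξ j hj.mate).degree x) ↔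
      x = r (D.orb x) ∧ D.parity σ (D.orb x) = 1 := by
    intro x
    rw [← ZMod.natCast_eq_one_iff_odd, degree_selection]
    have h01 : ∀ a : ZMod 2, (((if a = 1 then 1 else 0 : ℕ)) : ZMod 2) = a := by decide
    have h2 := hξ x
    have h3 := CharTwo.add_self_eq_zero (j x)
    have h4 : ξ x + ξ (D.succ.symm x) + j x = t x := by
      rw [h2, Pi.add_apply]
      linear_combination h3
    rw [Nat.cast_add, Nat.cast_add, h01, h01, h01, h4]
    by_cases hx : x = r (D.orb x)
    · simp only [t, if_pos hx]
      exact ⟨fun h => ⟨hx, h⟩, fun h => h.2⟩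
    · simp only [t, if_neg hx]
      exact ⟨fun h => absurd h zero_ne_one, fun h => absurd h.1 hx⟩
  have hrinj : ∀ c d, r c = r d → c = d := fun c d h => by rw [← hr c, h, hr]
  obtain ⟨𝓕, h𝓕, hcov, hlen⟩ := D.exists_family_of_odd_degree (σ := σ) _
    (D.selection ξ j hj.mate) le_rfl (D.selection_le ξ j hj.mate) (fun x hx => ((hodd x).1 hx).2)
    (fun x y hx hy hxy => by rw [((hodd x).1 hx).1, ((hodd y).1 hy).1, hxy])
  have hsum : ∑ x with Odd ((D.selection ξ j hj.mate).degree x),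
      (D.circuit (D.orb x)).edgeSet.ncard =
      ∑ c with ¬ D.parity σ c = 0, (D.circuit c).edgeSet.ncard := by
    symm
    refine Finset.sum_bij (fun c _ => r c) (fun c hc => ?_) (fun c _ d _ h => hrinj c d h)
      (fun x hx => ?_) (fun c _ => by rw [hr])
    · simp only [Finset.mem_filter, Finset.mem_univ, true_and] at hc ⊢
      rw [hodd, hr]
      exact ⟨rfl, (ZMod.two_eq_zero_or_one _).resolve_left hc⟩
    · simp only [Finset.mem_filter, Finset.mem_univ, true_and] at hx ⊢
      rw [hodd] at hx
      refine ⟨D.orb x, ?_, hx.1.symm⟩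
      rw [hx.2]
      exact one_ne_zero
  let 𝓑 : Multiset G.Subgraph :=
    (Finset.univ.filter fun c => D.parity σ c = 0).val.map D.circuit
  have h𝓑 : coverLength G 𝓑 = ∑ c with D.parity σ c = 0, (D.circuit c).edgeSet.ncard := by
    simp [coverLength, 𝓑, Finset.sum]
  have htotal : ∑ c, (D.circuit c).edgeSet.ncard = Fintype.card V := by
    have h := D.card_filter_eq_sum_orbit fun _ => True
    simp only [Finset.filter_true, and_true, Finset.card_univ] at h
    rw [h]
    exact Finset.sum_congr rfl fun c _ => D.circuit_edgeSet_ncard c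
  refine ⟨𝓕 + 𝓑, fun H hH => ?_, fun c => ?_, ?_⟩
  · rcases Multiset.mem_add.1 hH with hH | hH
    · exact h𝓕 H hH
    · obtain ⟨c, hc, rfl⟩ := Multiset.mem_map.1 hH
      exact .inl (D.balanced_of_parity_eq_zero (by simpa using hc))
  · by_cases hc : D.parity σ c = 0
    · exact ⟨_, Multiset.mem_add.2 (.inr (Multiset.mem_map_of_mem _ (by simpa using hc))), le_rfl⟩
    · obtain ⟨H, hH, hle⟩ := hcov (r c) ((hodd _).2
        (by rw [hr]; exact ⟨rfl, (ZMod.two_eq_zero_or_one _).resolve_left hc⟩))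
      rw [hr] at hle
      exact ⟨H, Multiset.mem_add.2 (.inl hH), hle⟩
  · have h1 := D.two_mul_card_edgeFinset_selection ξ j hj.mate
    have h2 := Finset.sum_filter_add_sum_filter_not Finset.univ (fun c => D.parity σ c = 0)
      fun c => (D.circuit c).edgeSet.ncard
    rw [coverLength_add, h𝓑]
    omega

/-- Follow the circuit edge leaving a vertex, then the matching edge if the join contains it. -/
def face (j : V → ZMod 2) (x : V) : V :=
  if j (D.succ x) = 1 then D.mate (D.succ x) else D.succ x

variable {D} {j : V → ZMod 2}

lemma face_of_eq_one {x : V} (h : j (D.succ x) = 1) : D.face j x = D.mate (D.succ x) := if_pos h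

lemma face_of_ne_one {x : V} (h : j (D.succ x) ≠ 1) : D.face j x = D.succ x := if_neg h

lemma face_injective (hj : ∀ x, j (D.mate x) = j x) : Function.Injective (D.face j) := by
  intro x y h
  by_cases hx : j (D.succ x) = 1 <;> by_cases hy : j (D.succ y) = 1
  · rw [face_of_eq_one hx, face_of_eq_one hy] at h
    exact D.succ.injective (D.mate_injective h)
  · rw [face_of_eq_one hx, face_of_ne_one hy] at h
    exact absurd (by rw [← h, hj, hx]) hy
  · rw [face_of_ne_one hx, face_of_eq_one hy] at h
    exact absurd (by rw [h, hj, hy]) hx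
  · rw [face_of_ne_one hx, face_of_ne_one hy] at h
    exact D.succ.injective h

lemma face_succ_symm {a : V} (ha : j a = 1) : D.face j (D.succ.symm a) = D.mate a := by
  rw [face_of_eq_one (by rwa [Equiv.apply_symm_apply]), Equiv.apply_symm_apply]

lemma orb_succ_symm (x : V) : D.orb (D.succ.symm x) = D.orb x := by
  rw [← D.orb_succ, Equiv.apply_symm_apply]

lemma iterate_face_of_forall_ne_one {x : V} {n : ℕ}
    (h : ∀ k < n, j (D.succ ((D.face j)^[k] x)) ≠ 1) : (D.face j)^[n] x = (D.succ ^ n) x := by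
  induction n with
  | zero => rfl
  | succ n ih =>
    rw [Function.iterate_succ_apply', face_of_ne_one (h n n.lt_succ_self),
      ih fun k hk => h k (hk.trans n.lt_succ_self), pow_succ', Equiv.Perm.mul_apply]

lemma isEnd_of_pow_eq [Finite V] {b : V} {r : ℕ} (hb : j b = 1) (hr : 0 < r) (hpow : (D.succ ^ r) b = b)
    (h : ∀ t, 0 < t → t < r → j ((D.succ ^ t) b) ≠ 1) : D.IsEnd j (D.orb b) := by
  refine ⟨b, ⟨rfl, hb⟩, fun y hy hjy => ?_⟩
  obtain ⟨m, rfl⟩ := D.exists_pow_of_orb_eq hy.symm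
  have hq : ∀ q : ℕ, (D.succ ^ (r * q)) b = b := by
    intro q
    induction q with
    | zero => rfl
    | succ q ih => rw [Nat.mul_succ, pow_add, Equiv.Perm.mul_apply, hpow, ih]
  have hm : (D.succ ^ m) b = (D.succ ^ (m % r)) b := by
    conv_lhs => rw [← Nat.mod_add_div m r, pow_add, Equiv.Perm.mul_apply, hq]
  rw [hm] at hjy ⊢
  rcases Nat.eq_zero_or_pos (m % r) with h0 | h0
  · rw [h0]; rfl
  · exact absurd hjy (h _ h0 (Nat.mod_lt _ hr))

/-- A face returning to the circuit it left would have to turn around at an end circuit. -/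
lemma isEnd_of_succ_iterate_face_eq [Finite V] {x : V} {n : ℕ} (hx : j x = 1)
    (h : ∀ k < n, j (D.succ ((D.face j)^[k] x)) ≠ 1) (hn : D.succ ((D.face j)^[n] x) = x) :
    D.IsEnd j (D.orb x) := by
  refine isEnd_of_pow_eq hx n.succ_pos ?_ fun t ht htn => ?_
  · rw [pow_succ', Equiv.Perm.mul_apply, ← iterate_face_of_forall_ne_one h, hn]
  · obtain ⟨t, rfl⟩ := Nat.exists_eq_succ_of_ne_zero ht.ne'
    have h1 := h t (by omega)
    rw [iterate_face_of_forall_ne_one fun k hk => h k (by omega)] at h1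
    rwa [pow_succ', Equiv.Perm.mul_apply]

/-- Every edge of a minimal join is a bridge between circuits. -/
def IsTight (D : OrientedTwoFactor G) (j : V → ZMod 2) : Prop :=
  (∀ x, j (D.mate x) = j x) ∧ ∀ x, j x = 1 →
    ∃ s : D.Orbit → Prop, s (D.orb x) ∧ ¬ s (D.orb (D.mate x)) ∧
      ∀ y, j y = 1 → y ≠ x → y ≠ D.mate x → (s (D.orb y) ↔ s (D.orb (D.mate y)))

/-- A face that crosses a bridge and comes back does so through the same bridge. -/
lemma IsTight.exists_return (hj : D.IsTight j) {a : V} (ha : j a = 1) {n : ℕ}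
    (hn : D.orb ((D.face j)^[n] (D.mate a)) = D.orb a) :
    ∃ p < n, D.succ ((D.face j)^[p] (D.mate a)) = D.mate a := by
  obtain ⟨s, hsa, hsb, hs⟩ := hj.2 a ha
  by_contra! hne
  have key : ∀ p ≤ n, ¬ s (D.orb ((D.face j)^[p] (D.mate a))) := by
    intro p
    induction p with
    | zero => exact fun _ => hsb
    | succ p ih =>
      intro hp
      have h1 := ih (by omega)
      rw [Function.iterate_succ_apply']
      rw [← D.orb_succ] at h1
      by_cases hc : j (D.succ ((D.face j)^[p] (D.mate a))) = 1
      · rw [face_of_eq_one hc, ← hs _ hc _ (hne p (by omega))]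
        · exact h1
        · intro h
          rw [h] at h1
          exact h1 hsa
      · rwa [face_of_ne_one hc]
  exact key n le_rfl (hn ▸ hsa)

lemma IsTight.ne_one_of_orb_eq [Finite V] (hj : D.IsTight j) {n : ℕ} {x : V}
    (hE : ∀ k < n, ¬ D.IsEnd j (D.orb ((D.face j)^[k] x)))
    (hn : D.orb ((D.face j)^[n] x) = D.orb x) :
    ∀ k < n, j (D.succ ((D.face j)^[k] x)) ≠ 1 := by
  induction n using Nat.strong_induction_on generalizing x with
  | _ n ih =>
  by_contra! hex
  have hk := Nat.find_spec hex
  have hmin : ∀ i < Nat.find hex, j (D.succ ((D.face j)^[i] x)) ≠ 1 := fun i hi h =>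
    Nat.find_min hex hi ⟨hi.trans hk.1, h⟩
  generalize Nat.find hex = k at hk hmin
  obtain ⟨hkn, hk⟩ := hk
  have hok : D.orb (D.succ ((D.face j)^[k] x)) = D.orb x := by
    rw [D.orb_succ, iterate_face_of_forall_ne_one hmin, D.orb_pow]
  have hit : ∀ i, (D.face j)^[i] (D.mate (D.succ ((D.face j)^[k] x))) =
      (D.face j)^[i + (k + 1)] x := by
    intro i
    rw [← face_of_eq_one hk, ← Function.iterate_succ_apply' (D.face j),
      ← Function.iterate_add_apply]
  obtain ⟨p, hp, hpa⟩ := hj.exists_return (n := n - (k + 1)) hk (by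
    rw [hit, Nat.sub_add_cancel hkn, hn, hok])
  have hE' : ∀ i ≤ p, ¬ D.IsEnd j
      (D.orb ((D.face j)^[i] (D.mate (D.succ ((D.face j)^[k] x))))) := by
    intro i hi
    rw [hit]
    exact hE _ (by omega)
  refine hE' 0 p.zero_le (isEnd_of_succ_iterate_face_eq ((hj.1 _).trans hk)
    (ih p (by omega) (fun i hi => hE' i hi.le) ?_) hpa)
  exact (D.orb_succ _).symm.trans (congrArg D.orb hpa)

/-- The face through `x` first enters an end circuit after `n` steps. -/
def FirstEnd (D : OrientedTwoFactor G) (j : V → ZMod 2) (n : ℕ) (x : V) : Prop :=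
  (∀ k < n, ¬ D.IsEnd j (D.orb ((D.face j)^[k] x))) ∧ D.IsEnd j (D.orb ((D.face j)^[n] x))

lemma FirstEnd.face {n : ℕ} {x : V} (h : D.FirstEnd j (n + 1) x) :
    D.FirstEnd j n (D.face j x) := by
  refine ⟨fun k hk => ?_, ?_⟩
  · rw [← Function.iterate_succ_apply]
    exact h.1 _ (by omega)
  · rw [← Function.iterate_succ_apply]
    exact h.2

lemma FirstEnd.iterate_ne {n : ℕ} {x : V} (h : D.FirstEnd j n x) {i : ℕ} (hi : 0 < i)
    (hin : i ≤ n) : (D.face j)^[i] x ≠ x := by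
  intro hx
  have h1 := h.2
  rw [show n = (n - i) + i by omega, Function.iterate_add_apply, hx] at h1
  exact h.1 _ (by omega) h1

lemma FirstEnd.succ_iterate_ne [Finite V] (hj : D.IsTight j) {n : ℕ} {x : V}
    (h : D.FirstEnd j n x) {k : ℕ} (hk : k < n) (hc : j (D.succ ((D.face j)^[k] x)) = 1) :
    D.succ ((D.face j)^[k] x) ≠ x := by
  intro hx
  refine h.1 0 (by omega) (isEnd_of_succ_iterate_face_eq (hx ▸ hc)
    (hj.ne_one_of_orb_eq (fun i hi => h.1 i (by omega)) ?_) hx)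
  exact (D.orb_succ _).symm.trans (congrArg D.orb hx)

lemma FirstEnd.iterate_ne_succ [Finite V] (hj : D.IsTight j) {n : ℕ} {x : V}
    (h : D.FirstEnd j n x) {i : ℕ} (hi : 0 < i) (hin : i ≤ n) (hc : j (D.succ x) = 1) :
    (D.face j)^[i] x ≠ D.succ x := by
  intro hx
  have ho : D.orb ((D.face j)^[i] x) = D.orb x := by rw [hx, D.orb_succ]
  exact hj.ne_one_of_orb_eq (fun k hk => h.1 k (by omega)) ho 0 hi hc

/-- A face segment ending in an end circuit is a path. -/
lemma FirstEnd.exists_path [Finite V] (hj : D.IsTight j) {n : ℕ} {x y : V} (h : D.FirstEnd j n x)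
    (hy : (D.face j)^[n] x = y) :
    ∃ w : G.Walk x y, w.IsPath ∧
      (∀ v ∈ w.support, (∃ i ≤ n, v = (D.face j)^[i] x) ∨
        ∃ k < n, j (D.succ ((D.face j)^[k] x)) = 1 ∧ v = D.succ ((D.face j)^[k] x)) ∧
      (∀ i < n, D.edge ((D.face j)^[i] x) ∈ w.edges) ∧
      w.length = ∑ i ∈ Finset.range n, (1 + if j (D.succ ((D.face j)^[i] x)) = 1 then 1 else 0) := by
  induction n generalizing x with
  | zero =>
    subst hy
    refine ⟨.nil, .nil, fun v hv => .inl ⟨0, le_rfl, by simpa using hv⟩, by simp, by simp⟩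
  | succ n ih =>
    obtain ⟨w, hw, hsupp, hedge, hlen⟩ := ih h.face hy
    simp only [← Function.iterate_succ_apply] at hsupp hedge hlen
    have hx : x ∉ w.support := by
      intro hx
      rcases hsupp x hx with ⟨i, hi, hxi⟩ | ⟨k, hk, hc, hxk⟩
      · exact h.iterate_ne (i := i + 1) (by omega) (by omega) hxi.symm
      · exact h.succ_iterate_ne hj (k := k + 1) (by omega) hc hxk.symm
    have hsupp' : ∀ v ∈ w.support, (∃ i ≤ n + 1, v = (D.face j)^[i] x) ∨
        ∃ k < n + 1, j (D.succ ((D.face j)^[k] x)) = 1 ∧ v = D.succ ((D.face j)^[k] x) := by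
      intro v hv
      rcases hsupp v hv with ⟨i, hi, hxi⟩ | ⟨k, hk, hc, hxk⟩
      · exact .inl ⟨i + 1, by omega, hxi⟩
      · exact .inr ⟨k + 1, by omega, hc, hxk⟩
    by_cases hc : j (D.succ x) = 1
    · have hadj : G.Adj (D.succ x) (D.face j x) := by
        rw [face_of_eq_one hc]
        exact D.adj_mate _
      have hy : D.succ x ∉ w.support := by
        intro hy
        rcases hsupp _ hy with ⟨i, hi, hxi⟩ | ⟨k, hk, hc', hxk⟩
        · exact h.iterate_ne_succ hj (i := i + 1) (by omega) (by omega) hc hxi.symm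
        · exact h.iterate_ne (i := k + 1) (by omega) (by omega) (D.succ.injective hxk).symm
      refine ⟨.cons (D.adj_succ x) (.cons hadj w), ?_, ?_, ?_, ?_⟩
      · rw [Walk.cons_isPath_iff, Walk.cons_isPath_iff, Walk.support_cons, List.mem_cons]
        exact ⟨⟨hw, hy⟩, fun h => h.elim (fun h => D.succ_ne x h.symm) hx⟩
      · intro v hv
        rw [Walk.support_cons, Walk.support_cons, List.mem_cons, List.mem_cons] at hv
        rcases hv with rfl | rfl | hv
        · exact .inl ⟨0, by omega, rfl⟩
        · exact .inr ⟨0, by omega, hc, rfl⟩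
        · exact hsupp' v hv
      · intro i hi
        rw [Walk.edges_cons, Walk.edges_cons, List.mem_cons, List.mem_cons]
        cases i with
        | zero => exact .inl rfl
        | succ i => exact .inr (.inr (hedge i (by omega)))
      · rw [Walk.length_cons, Walk.length_cons, hlen, Finset.sum_range_succ']
        simp only [Function.iterate_zero, id_eq, hc, if_true, add_assoc]
        rfl
    · have hadj : G.Adj x (D.face j x) := by
        rw [face_of_ne_one hc]
        exact D.adj_succ _
      refine ⟨.cons hadj w, ?_, ?_, ?_, ?_⟩
      · rw [Walk.cons_isPath_iff]
        exact ⟨hw, hx⟩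
      · intro v hv
        rw [Walk.support_cons, List.mem_cons] at hv
        rcases hv with rfl | hv
        · exact .inl ⟨0, by omega, rfl⟩
        · exact hsupp' v hv
      · intro i hi
        rw [Walk.edges_cons, List.mem_cons]
        cases i with
        | zero =>
          left
          simp [edge, face_of_ne_one hc]
        | succ i => exact .inr (hedge i (by omega))
      · rw [Walk.length_cons, hlen, Finset.sum_range_succ']
        simp only [Function.iterate_zero, id_eq, hc, if_false]
        rfl

lemma FirstEnd.orb_ne [Finite V] (hj : D.IsTight j) {a : V} (ha : j a = 1) {n : ℕ}
    (h : D.FirstEnd j n (D.mate a)) : D.orb ((D.face j)^[n] (D.mate a)) ≠ D.orb a := by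
  intro ho
  obtain ⟨p, hp, hpa⟩ := hj.exists_return ha ho
  exact h.succ_iterate_ne hj hp (by rw [hpa, hj.1, ha]) hpa

lemma exists_firstEnd [Finite V] (hj : ∀ x, j (D.mate x) = j x) {a : V} (ha : j a = 1)
    (hE : D.IsEnd j (D.orb a)) : ∃ n, D.FirstEnd j n (D.mate a) := by
  have hex : ∃ n, D.IsEnd j (D.orb ((D.face j)^[n] (D.mate a))) := by
    obtain ⟨m, hm, hper⟩ := (face_injective hj).mem_periodicPts (D.mate a)
    refine ⟨m - 1, ?_⟩
    have : (D.face j)^[m - 1] (D.mate a) = D.succ.symm a := by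
      apply face_injective hj
      rw [← Function.iterate_succ_apply' (f := D.face j), Nat.succ_eq_add_one,
        Nat.sub_add_cancel hm, face_succ_symm ha]
      exact hper
    rwa [this, orb_succ_symm]
  exact ⟨Nat.find hex, fun k hk => Nat.find_min hex hk, Nat.find_spec hex⟩

lemma FirstEnd.iterate_inj (hj : ∀ x, j (D.mate x) = j x) {a b : V} (ha : j a = 1) (hb : j b = 1)
    (hEa : D.IsEnd j (D.orb a)) (hEb : D.IsEnd j (D.orb b)) {n m : ℕ}
    (hn : D.FirstEnd j n (D.mate a)) (hm : D.FirstEnd j m (D.mate b)) {i k : ℕ} (hi : i ≤ n)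
    (hk : k ≤ m) (h : (D.face j)^[i] (D.mate a) = (D.face j)^[k] (D.mate b)) : a = b ∧ i = k := by
  wlog hik : i ≤ k generalizing a b n m i k
  · have := this hb ha hEb hEa hm hn hk hi h.symm (by omega)
    exact ⟨this.1.symm, this.2.symm⟩
  obtain ⟨d, rfl⟩ := Nat.exists_eq_add_of_le hik
  rw [Function.iterate_add_apply] at h
  have h1 := (face_injective hj).iterate i h
  cases d with
  | zero => exact ⟨D.mate_injective h1, rfl⟩
  | succ d =>
    rw [← face_succ_symm ha, Function.iterate_succ_apply'] at h1
    have h2 := face_injective hj h1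
    refine absurd ?_ (hm.1 d (by omega))
    rwa [← h2, orb_succ_symm]

lemma not_isFree_iterate_face (hj : ∀ x, j (D.mate x) = j x) {x : V} (hx : ¬ D.IsFree j (D.orb x))
    (n : ℕ) : ¬ D.IsFree j (D.orb ((D.face j)^[n] x)) := by
  induction n with
  | zero => exact hx
  | succ n ih =>
    rw [Function.iterate_succ_apply']
    by_cases hc : j (D.succ ((D.face j)^[n] x)) = 1
    · rw [face_of_eq_one hc]
      intro h
      have := h _ rfl
      rw [hj, hc] at this
      exact one_ne_zero this
    · rwa [face_of_ne_one hc, D.orb_succ]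

lemma not_isFree_of_eq_one {x : V} (hx : j x = 1) : ¬ D.IsFree j (D.orb x) := fun h =>
  one_ne_zero (hx.symm.trans (h x rfl))

lemma FirstEnd.eq_one (hj : ∀ x, j (D.mate x) = j x) {a : V} (ha : j a = 1) {n : ℕ}
    (hn : D.FirstEnd j n (D.mate a)) : j ((D.face j)^[n] (D.mate a)) = 1 := by
  cases n with
  | zero => exact (hj a).trans ha
  | succ n =>
    have h1 := hn.1 n n.lt_succ_self
    have h2 := hn.2
    rw [Function.iterate_succ_apply'] at h2 ⊢
    by_cases hc : j (D.succ ((D.face j)^[n] (D.mate a))) = 1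
    · rw [face_of_eq_one hc, hj, hc]
    · rw [face_of_ne_one hc, D.orb_succ] at h2
      exact absurd h2 h1

/-- Every vertex of an inner circuit lies on a face segment leaving an end circuit. -/
lemma IsTight.exists_iterate_eq [Finite V] (hj : D.IsTight j) {x : V}
    (hx : D.IsInner j (D.orb x)) : ∃ a, j a = 1 ∧ D.IsEnd j (D.orb a) ∧
      ∃ i, (D.face j)^[i] (D.mate a) = x ∧
        ∀ k ≤ i, ¬ D.IsEnd j (D.orb ((D.face j)^[k] (D.mate a))) := by
  have hex : ∃ k, ∃ y, (D.face j)^[k + 1] y = x ∧ D.IsEnd j (D.orb y) := by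
    by_contra! hno
    obtain ⟨m, hm, hper⟩ := (face_injective hj.1).mem_periodicPts x
    have hper' : ∀ q, (D.face j)^[m * q] x = x := fun q => (hper.mul_const q)
    have hE : ∀ i, ¬ D.IsEnd j (D.orb ((D.face j)^[i] x)) := by
      intro i
      have hle : i + 1 ≤ m * (i + 1) := Nat.le_mul_of_pos_left _ hm
      refine hno (m * (i + 1) - i - 1) _ ?_
      rw [← Function.iterate_add_apply, show m * (i + 1) - i - 1 + 1 + i = m * (i + 1) by omega,
        hper']
    have hc : ∀ k, j (D.succ ((D.face j)^[k] x)) ≠ 1 := fun k =>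
      hj.ne_one_of_orb_eq (n := m * (k + 1)) (fun i _ => hE i) (by rw [hper']) k
        (Nat.le_mul_of_pos_left _ hm)
    refine hx.2 fun y hy => (ZMod.two_eq_zero_or_one _).resolve_right ?_
    obtain ⟨k, hk⟩ := D.exists_pow_of_orb_eq (hy.symm.trans (orb_succ_symm y).symm)
    have h := hc k
    rwa [iterate_face_of_forall_ne_one fun i _ => hc i, hk, Equiv.apply_symm_apply] at h
  obtain ⟨y, hy, hEy⟩ := Nat.find_spec hex
  have hmin : ∀ i < Nat.find hex, ∀ z, (D.face j)^[i + 1] z = x → ¬ D.IsEnd j (D.orb z) :=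
    fun i hi z hz hE => Nat.find_min hex hi ⟨z, hz, hE⟩
  generalize Nat.find hex = k at hy hmin
  have hne : ∀ i ≤ k, ¬ D.IsEnd j (D.orb ((D.face j)^[i + 1] y)) := by
    intro i hi
    rcases hi.eq_or_lt with rfl | hi
    · rw [hy]
      exact hx.1
    · refine hmin (k - i - 1) (by omega) _ ?_
      rw [← Function.iterate_add_apply, show k - i - 1 + 1 + (i + 1) = k + 1 by omega, hy]
  have hc : j (D.succ y) = 1 := by
    by_contra hc
    refine hne 0 k.zero_le ?_
    rwa [Function.iterate_one, face_of_ne_one hc, D.orb_succ]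
  refine ⟨D.succ y, hc, by rwa [D.orb_succ], k, ?_, fun i hi => ?_⟩
  · rw [← face_of_eq_one hc, ← Function.iterate_succ_apply, hy]
  · rw [← face_of_eq_one hc, ← Function.iterate_succ_apply]
    exact hne i hi

/-- The barbell along a face segment between two end circuits. -/
lemma FirstEnd.exists_barbell [Fintype V] {σ : Sym2 V → Bool} (hσ : D.IsJoin σ j)
    (hj : D.IsTight j) {a : V} (ha : j a = 1) (hE : D.IsEnd j (D.orb a)) {n : ℕ}
    (hn : D.FirstEnd j n (D.mate a)) :
    ∃ H : G.Subgraph, IsSignCircuit G σ H ∧ D.circuit (D.orb a) ≤ H ∧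
      (∀ i < n, D.edge ((D.face j)^[i] (D.mate a)) ∈ H.edgeSet) ∧
      H.edgeSet.ncard ≤ (D.circuit (D.orb a)).edgeSet.ncard +
        (D.circuit (D.orb ((D.face j)^[n] (D.mate a)))).edgeSet.ncard +
        (1 + ∑ i ∈ Finset.range n,
          (1 + if j (D.succ ((D.face j)^[i] (D.mate a))) = 1 then 1 else 0)) := by
  obtain ⟨w, hw, hsupp, hedge, hlen⟩ := hn.exists_path hj rfl
  have hne := hn.orb_ne hj ha
  have hsupp' : ∀ v ∈ w.support, ¬ D.IsEnd j (D.orb v) ∨ v = (D.face j)^[n] (D.mate a) := by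
    intro v hv
    rcases hsupp v hv with ⟨i, hi, rfl⟩ | ⟨k, hk, -, rfl⟩
    · rcases hi.eq_or_lt with rfl | hi
      · exact .inr rfl
      · exact .inl (hn.1 i hi)
    · rw [D.orb_succ]
      exact .inl (hn.1 k hk)
  have haw : ∀ v ∈ w.support, D.orb v ≠ D.orb a := by
    intro v hv hva
    rcases hsupp' v hv with h | rfl
    · exact h (hva ▸ hE)
    · exact hne hva
  refine ⟨_, D.exists_barbell_of_isPath (σ := σ) (hE.parity_eq_one D hσ)
    (hn.2.parity_eq_one D hσ) hne.symm (.cons (D.adj_mate a) w) ?_ ?_ ?_, ?_, ?_, ?_⟩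
  · exact (Walk.cons_isPath_iff _ _).2 ⟨hw, fun h => haw a h rfl⟩
  · intro x hx hxa
    rw [Walk.support_cons, List.mem_cons] at hx
    exact hx.resolve_right fun h => haw x h hxa
  · intro x hx hxa
    rw [Walk.support_cons, List.mem_cons] at hx
    rcases hx with rfl | hx
    · exact absurd hxa hne.symm
    · exact (hsupp' x hx).resolve_left fun h => h (hxa ▸ hn.2)
  · exact le_sup_left.trans le_sup_left
  · intro i hi
    refine Subgraph.edgeSet_mono le_sup_right ?_
    rw [Walk.mem_edges_toSubgraph, Walk.edges_cons]
    exact List.mem_cons_of_mem _ (hedge i hi)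
  · refine (D.ncard_edgeSet_barbell_le _ _ _).trans (le_of_eq ?_)
    rw [Walk.length_cons, hlen]
    ring

lemma sum_circuit_ncard_le [Fintype V] (S : Finset D.Orbit) {p : V → Prop}
    (hp : ∀ x, D.orb x ∈ S → p x) :
    ∑ c ∈ S, (D.circuit c).edgeSet.ncard ≤ (Finset.univ.filter p).card := by
  have h : (Finset.univ.filter fun x => D.orb x ∈ S).card =
      ∑ c ∈ S, (D.circuit c).edgeSet.ncard := by
    rw [Finset.card_eq_sum_card_fiberwise (f := D.orb) (t := S) (by intro; simp)]
    refine Finset.sum_congr rfl fun c hc => ?_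
    rw [circuit_edgeSet_ncard, Finset.filter_filter]
    congr 1
    ext x
    simp only [Finset.mem_filter, Finset.mem_univ, true_and]
    exact ⟨fun h => h.2, fun h => ⟨h ▸ hc, h⟩⟩
  rw [← h]
  exact Finset.card_le_card fun x hx => by simpa using hp x (by simpa using hx)

/-- Covering every end circuit twice by barbells running along the faces of the join, and
every other circuit once. -/
lemma exists_family_double [Fintype V] {σ : Sym2 V → Bool} (hσ : D.IsJoin σ j)
    (hj : D.IsTight j) :
    ∃ 𝓕 : Multiset G.Subgraph, (∀ H ∈ 𝓕, IsSignCircuit G σ H) ∧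
      (∀ x, ∃ H ∈ 𝓕, D.edge x ∈ H.edgeSet) ∧
      coverLength G 𝓕 ≤ size j + (Finset.univ.filter fun x => D.IsInner j (D.orb x)).card +
        2 * (Finset.univ.filter fun x => D.IsEnd j (D.orb x)).card +
        (Finset.univ.filter fun x => D.IsFree j (D.orb x)).card := by
  let Λ : Finset V := Finset.univ.filter fun x => j x = 1 ∧ D.IsEnd j (D.orb x)
  have hΛ : ∀ a, a ∈ Λ ↔ j a = 1 ∧ D.IsEnd j (D.orb a) := fun a => by simp [Λ]
  have hn : ∀ a, ∃ n, a ∈ Λ → D.FirstEnd j n (D.mate a) := fun a => by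
    by_cases ha : a ∈ Λ
    · obtain ⟨n, hn⟩ := exists_firstEnd hj.1 ((hΛ a).1 ha).1 ((hΛ a).1 ha).2
      exact ⟨n, fun _ => hn⟩
    · exact ⟨0, fun h => absurd h ha⟩
  choose n hn using hn
  have hH : ∀ a, ∃ H : G.Subgraph, a ∈ Λ → IsSignCircuit G σ H ∧ D.circuit (D.orb a) ≤ H ∧
      (∀ i < n a, D.edge ((D.face j)^[i] (D.mate a)) ∈ H.edgeSet) ∧
      H.edgeSet.ncard ≤ (D.circuit (D.orb a)).edgeSet.ncard +
        (D.circuit (D.orb ((D.face j)^[n a] (D.mate a)))).edgeSet.ncard +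
        (1 + ∑ i ∈ Finset.range (n a),
          (1 + if j (D.succ ((D.face j)^[i] (D.mate a))) = 1 then 1 else 0)) := fun a => by
    by_cases ha : a ∈ Λ
    · obtain ⟨H, hH⟩ := (hn a ha).exists_barbell hσ hj ((hΛ a).1 ha).1 ((hΛ a).1 ha).2
      exact ⟨H, fun _ => hH⟩
    · exact ⟨⊥, fun h => absurd h ha⟩
  choose H hH using hH
  have hinj : ∀ a ∈ Λ, ∀ b ∈ Λ, ∀ i ≤ n a, ∀ k ≤ n b,
      (D.face j)^[i] (D.mate a) = (D.face j)^[k] (D.mate b) → a = b ∧ i = k :=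
    fun a ha b hb i hi k hk h => FirstEnd.iterate_inj hj.1 ((hΛ a).1 ha).1 ((hΛ b).1 hb).1
      ((hΛ a).1 ha).2 ((hΛ b).1 hb).2 (hn a ha) (hn b hb) hi hk h
  have hends : ∑ a ∈ Λ, (D.circuit (D.orb a)).edgeSet.ncard ≤
      (Finset.univ.filter fun x => D.IsEnd j (D.orb x)).card := by
    rw [← Finset.sum_image (s := Λ) (g := D.orb) (f := fun c => (D.circuit c).edgeSet.ncard)]
    · refine sum_circuit_ncard_le _ fun x hx => ?_
      obtain ⟨a, ha, hax⟩ := Finset.mem_image.1 hx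
      exact hax ▸ ((hΛ a).1 ha).2
    · intro a ha b hb hab
      obtain ⟨x, -, hx⟩ := ((hΛ a).1 ha).2
      rw [hx a rfl ((hΛ a).1 ha).1, hx b hab.symm ((hΛ b).1 hb).1]
  have hends' : ∑ a ∈ Λ, (D.circuit (D.orb ((D.face j)^[n a] (D.mate a)))).edgeSet.ncard ≤
      ∑ a ∈ Λ, (D.circuit (D.orb a)).edgeSet.ncard := by
    rw [← Finset.sum_image (s := Λ) (g := fun a => (D.face j)^[n a] (D.mate a))
      (f := fun a => (D.circuit (D.orb a)).edgeSet.ncard)]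
    · refine Finset.sum_le_sum_of_subset fun b hb => ?_
      obtain ⟨a, ha, rfl⟩ := Finset.mem_image.1 hb
      exact (hΛ _).2 ⟨(hn a ha).eq_one hj.1 ((hΛ a).1 ha).1, (hn a ha).2⟩
    · exact fun a ha b hb hab => (hinj a ha b hb _ le_rfl _ le_rfl hab).1
  have hfree : ∑ c with D.IsFree j c, (D.circuit c).edgeSet.ncard ≤
      (Finset.univ.filter fun x => D.IsFree j (D.orb x)).card :=
    sum_circuit_ncard_le _ fun x hx => by simpa using hx
  have hpaths : ∑ a ∈ Λ, ∑ i ∈ Finset.range (n a),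
      (1 + if j (D.succ ((D.face j)^[i] (D.mate a))) = 1 then 1 else 0) ≤
      ∑ x with D.IsInner j (D.orb x), (1 + if j (D.succ x) = 1 then 1 else 0) := by
    rw [Finset.sum_sigma', ← Finset.sum_image (s := Λ.sigma fun a => Finset.range (n a))
      (g := fun p => (D.face j)^[p.2] (D.mate p.1))
      (f := fun x => 1 + if j (D.succ x) = 1 then 1 else 0)]
    · refine Finset.sum_le_sum_of_subset fun x hx => ?_
      obtain ⟨⟨a, i⟩, hp, rfl⟩ := Finset.mem_image.1 hx
      simp only [Finset.mem_sigma, Finset.mem_range] at hp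
      simp only [Finset.mem_filter, Finset.mem_univ, true_and]
      exact ⟨(hn a hp.1).1 i hp.2, not_isFree_iterate_face hj.1
        (not_isFree_of_eq_one ((hj.1 a).trans ((hΛ a).1 hp.1).1)) i⟩
    · rintro ⟨a, i⟩ hp ⟨b, k⟩ hq h
      simp only [Finset.coe_sigma, Set.mem_sigma_iff, Finset.mem_coe, Finset.mem_range] at hp hq
      obtain ⟨rfl, rfl⟩ := hinj a hp.1 b hq.1 i hp.2.le k hq.2.le h
      rfl
  have hcross : Λ.card + (Finset.univ.filter fun x => D.IsInner j (D.orb x) ∧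
      j (D.succ x) = 1).card ≤ size j := by
    have h1 : (Finset.univ.filter fun x => D.IsInner j (D.orb x) ∧ j (D.succ x) = 1).card ≤
        (Finset.univ.filter fun x => D.IsInner j (D.orb x) ∧ j x = 1).card :=
      Finset.card_le_card_of_injOn D.succ (by intro x; simp) D.succ.injective.injOn
    refine (Nat.add_le_add_left h1 _).trans ?_
    rw [← Finset.card_union_of_disjoint]
    · refine Finset.card_le_card fun x hx => ?_
      simp only [Finset.mem_union, hΛ, Finset.mem_filter, Finset.mem_univ, true_and] at hx ⊢
      exact hx.elim And.left And.right
    · rw [Finset.disjoint_left]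
      intro x hx
      simp only [Finset.mem_filter, Finset.mem_univ, true_and]
      exact fun h => h.1.1 ((hΛ x).1 hx).2
  refine ⟨Λ.val.map H + (Finset.univ.filter fun c => D.IsFree j c).val.map D.circuit,
    fun B hB => ?_, fun x => ?_, ?_⟩
  · rcases Multiset.mem_add.1 hB with hB | hB
    · obtain ⟨a, ha, rfl⟩ := Multiset.mem_map.1 hB
      exact (hH a ha).1
    · obtain ⟨c, hc, rfl⟩ := Multiset.mem_map.1 hB
      have hc : D.IsFree j c := by simpa using hc
      exact .inl (D.balanced_of_parity_eq_zero (hc.parity_eq_zero D hσ))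
  · have hx : D.edge x ∈ (D.circuit (D.orb x)).edgeSet := by
      rw [circuit_edgeSet]
      exact ⟨x, rfl, rfl⟩
    by_cases hE : D.IsEnd j (D.orb x)
    · obtain ⟨a, ⟨hax, hja⟩, -⟩ := id hE
      have ha : a ∈ Λ := (hΛ a).2 ⟨hja, hax ▸ hE⟩
      refine ⟨H a, Multiset.mem_add.2 (.inl (Multiset.mem_map_of_mem _ ha)), ?_⟩
      exact Subgraph.edgeSet_mono (hH a ha).2.1 (hax ▸ hx)
    by_cases hF : D.IsFree j (D.orb x)
    · exact ⟨_, Multiset.mem_add.2 (.inr (Multiset.mem_map_of_mem _ (by simpa using hF))), hx⟩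
    obtain ⟨a, hja, hEa, i, rfl, hi⟩ := hj.exists_iterate_eq ⟨hE, hF⟩
    have ha : a ∈ Λ := (hΛ a).2 ⟨hja, hEa⟩
    refine ⟨H a, Multiset.mem_add.2 (.inl (Multiset.mem_map_of_mem _ ha)), ?_⟩
    refine (hH a ha).2.2.1 i ?_
    by_contra! hle
    exact hi _ hle (hn a ha).2
  · have h1 : coverLength G (Λ.val.map H) = ∑ a ∈ Λ, (H a).edgeSet.ncard := by
      simp only [coverLength, Multiset.map_map]
      rfl
    have h2 : coverLength G ((Finset.univ.filter fun c => D.IsFree j c).val.map D.circuit) =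
        ∑ c with D.IsFree j c, (D.circuit c).edgeSet.ncard := by
      simp only [coverLength, Multiset.map_map]
      rfl
    have h3 := Finset.sum_le_sum fun a ha => (hH a ha).2.2.2
    simp only [Finset.sum_add_distrib, Finset.sum_const, smul_eq_mul, mul_one, Finset.card_range,
      Finset.sum_boole, Finset.filter_filter, Nat.cast_id] at h3 hpaths
    rw [coverLength_add, h1, h2]
    omega

end OrientedTwoFactor

/-- Lemma 2.6. A 2-factor `F` of a 2-edge-connected cubic
signed graph with an even number of negative edges can be covered by sign-circuits
of total length at most `(10/9)|E(G)|`. -/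
theorem stmt2 {V : Type*} [Fintype V] (G : SimpleGraph V) (σ : Sym2 V → Bool)
    (h2ec : TwoEdgeConnected G) (hcubic : IsCubic G)
    (F : G.Subgraph) (hF : IsTwoFactor G F)
    (hEven : Even (negCount σ F.edgeSet)) :
    ∃ 𝓕 : Multiset G.Subgraph, (∀ H ∈ 𝓕, IsSignCircuit G σ H) ∧
      Covers G 𝓕 F.edgeSet ∧
      9 * coverLength G 𝓕 ≤ 10 * G.edgeSet.ncard := by
  classical
  obtain ⟨D, hD⟩ := exists_orientedTwoFactor G hcubic F hF
  have hFe : F.edgeSet = D.edge '' {x | True} := by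
    ext e
    induction e with
    | _ x y =>
      rw [Subgraph.mem_edgeSet, hD]
      constructor
      · rintro (rfl | rfl)
        · exact ⟨x, trivial, rfl⟩
        · exact ⟨y, trivial, Sym2.eq_swap⟩
      · rintro ⟨z, -, hz⟩
        rcases Sym2.eq_iff.1 hz with ⟨rfl, rfl⟩ | ⟨rfl, rfl⟩
        · exact .inl rfl
        · exact .inr rfl
  have hcard : 2 * G.edgeSet.ncard = 3 * Fintype.card V := by
    rw [← coe_edgeFinset, Set.ncard_coe_finset, ← sum_degrees_eq_twice_card_edges,
      Finset.sum_congr rfl fun v _ => ?_, Finset.sum_const, Finset.card_univ, smul_eq_mul, mul_comm]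
    rw [← card_neighborSet_eq_degree, ← Nat.card_eq_fintype_card]
    exact hcubic v
  obtain ⟨j, hj, hmin, hsize⟩ := D.exists_min_isJoin h2ec σ (by
    have h := D.negCount_image_edge σ fun _ => True
    rw [← hFe, (ZMod.natCast_eq_zero_iff_even).2 hEven] at h
    simpa using h.symm)
  have htight : D.IsTight j := ⟨hj.mate, fun x hx => D.exists_cut hj hmin hx⟩
  obtain ⟨𝓕₁, hs₁, hc₁, hl₁⟩ := D.exists_family_single hj
  obtain ⟨𝓕₂, hs₂, hc₂, hl₂⟩ := OrientedTwoFactor.exists_family_double hj htight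
  have hcov₁ : Covers G 𝓕₁ F.edgeSet := by
    rw [hFe]
    rintro _ ⟨x, -, rfl⟩
    obtain ⟨H, hH, hle⟩ := hc₁ (D.orb x)
    refine ⟨H, hH, Subgraph.edgeSet_mono hle ?_⟩
    rw [D.circuit_edgeSet]
    exact ⟨x, rfl, rfl⟩
  have hcov₂ : Covers G 𝓕₂ F.edgeSet := by
    rw [hFe]
    rintro _ ⟨x, -, rfl⟩
    exact hc₂ x
  have hsplit : (Finset.univ.filter fun x => D.IsInner j (D.orb x)).card +
      (Finset.univ.filter fun x => D.IsEnd j (D.orb x)).card +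
      (Finset.univ.filter fun x => D.IsFree j (D.orb x)).card = Fintype.card V := by
    rw [← Finset.card_union_of_disjoint, ← Finset.card_union_of_disjoint, ← Finset.card_univ]
    · congr 1
      ext x
      simp only [Finset.mem_union, Finset.mem_filter, Finset.mem_univ, true_and, iff_true]
      rw [OrientedTwoFactor.IsInner]
      tauto
    · rw [Finset.disjoint_left]
      simp only [Finset.mem_union, Finset.mem_filter, Finset.mem_univ, true_and]
      rintro x (h | ⟨y, ⟨hyx, hy⟩, -⟩) hf
      · exact h.2 hf
      · exact one_ne_zero (hy.symm.trans (hf y hyx))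
    · rw [Finset.disjoint_left]
      simp only [Finset.mem_filter, Finset.mem_univ, true_and]
      exact fun x h => h.1
  rcases le_total (coverLength G 𝓕₁) (coverLength G 𝓕₂) with h | h
  · exact ⟨𝓕₁, hs₁, hcov₁, by omega⟩
  · exact ⟨𝓕₂, hs₂, hcov₂, by omega⟩
end

section
/- Let C be an unbalanced circuit of a flow-admissible cubic signed graph (G,σ) such that G − E(C) is balanced. Then (G,σ) has a family F of sign-circuits covering all edges of C with total length ℓ(F) ≤ (8/9)|E(G)| + |E(C)|. -/
open SimpleGraph

variable {V : Type*}

theorem isCircuit_toSubgraph_of_isCycle {G : SimpleGraph V} {u : V} {w : G.Walk u u}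
    (hw : w.IsCycle) : IsCircuit G w.toSubgraph :=
  ⟨w.toSubgraph_connected, fun _ hv =>
    hw.ncard_neighborSet_toSubgraph_eq_two (w.mem_verts_toSubgraph.1 hv)⟩

/-- A circuit is the subgraph of a cyclic walk. -/
theorem IsCircuit.exists_isCycle [Finite V] {G : SimpleGraph V} {C : G.Subgraph}
    (hC : IsCircuit G C) : ∃ (u : V) (w : G.Walk u u), w.IsCycle ∧ w.toSubgraph = C := by
  obtain ⟨hconn, hdeg⟩ := hC
  obtain ⟨v, hv⟩ := hconn.nonempty
  have hcyc : C.spanningCoe.IsCycles := by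
    rintro x ⟨y, hy⟩
    exact hdeg x (C.edge_vert hy)
  obtain ⟨y, hy⟩ : (C.neighborSet v).Nonempty :=
    Set.nonempty_of_ncard_ne_zero (by rw [hdeg v hv]; decide)
  have hy' : C.spanningCoe.Adj v y := hy
  obtain ⟨u, p, hp, hpe⟩ := adj_and_reachable_delete_edges_iff_exists_cycle.mp
    ⟨hy', hcyc.reachable_deleteEdges hy'⟩
  have hq : (p.mapLe C.spanningCoe_le).IsCycle := hp.mapLe C.spanningCoe_le
  refine ⟨u, p.mapLe C.spanningCoe_le, hq, ?_⟩
  set q := p.mapLe C.spanningCoe_le with hqdef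
  have hsub : ∀ a b, q.toSubgraph.Adj a b → C.Adj a b := by
    intro a b hab
    rw [Walk.adj_toSubgraph_iff_mem_edges, hqdef, Walk.edges_mapLe_eq_edges] at hab
    exact p.adj_of_mem_edges hab
  have hnb : ∀ a ∈ q.toSubgraph.verts, ∀ b, C.Adj a b → q.toSubgraph.Adj a b := by
    intro a ha b hab
    have hsubset : q.toSubgraph.neighborSet a ⊆ C.neighborSet a := fun b hb => hsub a b hb
    have heq := Set.eq_of_subset_of_ncard_le hsubset (by
      rw [hdeg a (C.edge_vert hab), (isCircuit_toSubgraph_of_isCycle hq).2 a ha]) (Set.toFinite _)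
    exact heq.symm.subset hab
  have hvq : v ∈ q.toSubgraph.verts := by
    rw [Walk.mem_verts_toSubgraph, hqdef, Walk.support_mapLe_eq_support]
    exact p.fst_mem_support_of_mem_edges hpe
  have hwalk : ∀ (a b : C.verts), C.coe.Walk a b → (a : V) ∈ q.toSubgraph.verts →
      (b : V) ∈ q.toSubgraph.verts := by
    intro a b r
    induction r with
    | nil => exact id
    | cons h r ih => exact fun ha => ih (q.toSubgraph.edge_vert (hnb _ ha _ h).symm)
  have hverts : q.toSubgraph.verts = C.verts := by
    apply Set.Subset.antisymm
    · intro x hx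
      obtain ⟨z, hz⟩ : (q.toSubgraph.neighborSet x).Nonempty :=
        Set.nonempty_of_ncard_ne_zero (by rw [(isCircuit_toSubgraph_of_isCycle hq).2 x hx]; decide)
      exact C.edge_vert (hsub x z hz)
    · intro x hx
      obtain ⟨r⟩ := hconn.coe.preconnected ⟨v, hv⟩ ⟨x, hx⟩
      exact hwalk _ _ r hvq
  refine Subgraph.ext hverts ?_
  ext a b
  exact ⟨hsub a b, fun h => hnb a (hverts.symm ▸ C.edge_vert h) b h⟩

/-- The sign of an edge, written additively. -/
def edgeSign (σ : Sym2 V → Bool) (e : Sym2 V) : ZMod 2 := if σ e then 1 else 0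

/-- The sign of a walk, written additively. -/
def walkSign {G : SimpleGraph V} (σ : Sym2 V → Bool) {u v : V} (w : G.Walk u v) : ZMod 2 :=
  (w.edges.map (edgeSign σ)).sum

theorem negCount_eq_walkSign {G : SimpleGraph V} (σ : Sym2 V → Bool)
    {u v : V} {w : G.Walk u v} (hw : w.IsTrail) :
    (negCount σ w.toSubgraph.edgeSet : ZMod 2) = walkSign σ w := by
  classical
  have hset : w.toSubgraph.edgeSet ∩ {e | σ e = true} =
      ((w.edges.toFinset.filter fun e => σ e = true : Finset (Sym2 V)) : Set (Sym2 V)) := by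
    ext e
    simp
  rw [negCount, hset, Set.ncard_coe_finset, Finset.card_filter, walkSign,
    ← List.sum_toFinset _ hw.edges_nodup]
  push_cast
  rfl

theorem walkSign_eq_add_of_potential {G : SimpleGraph V} {σ : Sym2 V → Bool} {f : V → ZMod 2}
    {u v : V} (w : G.Walk u v)
    (hf : ∀ a b, s(a, b) ∈ w.edges → edgeSign σ s(a, b) = f a + f b) :
    walkSign σ w = f u + f v := by
  induction w with
  | nil => simp [walkSign, CharTwo.add_self_eq_zero]
  | @cons a b c h p ih =>
    have h1 := hf a b (by simp)
    have h2 := ih fun x y hxy => hf x y (by simp [hxy])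
    simp only [walkSign, Walk.edges_cons, List.map_cons, List.sum_cons] at h2 ⊢
    rw [h1, h2]
    linear_combination CharTwo.add_self_eq_zero (f b)

theorem walkSign_append {G : SimpleGraph V} (σ : Sym2 V → Bool) {u v x : V} (p : G.Walk u v)
    (q : G.Walk v x) : walkSign σ (p.append q) = walkSign σ p + walkSign σ q := by
  simp [walkSign]

theorem walkSign_reverse {G : SimpleGraph V} (σ : Sym2 V → Bool) {u v : V} (p : G.Walk u v) :
    walkSign σ p.reverse = walkSign σ p := by
  simp [walkSign, List.sum_reverse]

theorem IsBalancedGraph.walkSign_bypass [DecidableEq V] {H : SimpleGraph V} {σ : Sym2 V → Bool}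
    (hH : IsBalancedGraph H σ) {u v : V} (w : H.Walk u v) :
    walkSign σ w.bypass = walkSign σ w := by
  induction w with
  | nil => rfl
  | @cons a b c h p ih =>
    have hcons : walkSign σ (Walk.cons h p) = edgeSign σ s(a, b) + walkSign σ p := by
      simp [walkSign]
    rw [Walk.bypass]
    split_ifs with hs
    · have hsplit : walkSign σ p.bypass =
          walkSign σ (p.bypass.takeUntil a hs) + walkSign σ (p.bypass.dropUntil a hs) := by
        rw [← walkSign_append, Walk.take_spec]
      have hpath : (p.bypass.takeUntil a hs).IsPath := p.bypass_isPath.takeUntil hs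
      suffices hz : edgeSign σ s(a, b) + walkSign σ (p.bypass.takeUntil a hs) = 0 by
        rw [hcons, ← ih, hsplit, ← add_assoc, hz, zero_add]
      generalize p.bypass.takeUntil a hs = t at hpath
      by_cases hmem : s(a, b) ∈ t.edges
      · have ht : t = Walk.cons h.symm Walk.nil := by
          cases t with
          | nil => exact absurd h (H.loopless.irrefl _)
          | @cons _ y _ h' t' =>
            rw [Walk.cons_isPath_iff] at hpath
            rw [Walk.edges_cons, List.mem_cons] at hmem
            rcases hmem with hmem | hmem
            · have hy : y = a := by
                rw [Sym2.eq_iff] at hmem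
                rcases hmem with ⟨h1, h2⟩ | ⟨h1, h2⟩
                · exact absurd h1 h.ne
                · exact h1.symm
              subst hy
              rw [(Walk.isPath_iff_nil.1 hpath.1).eq_nil]
            · exact absurd (t'.snd_mem_support_of_mem_edges hmem) hpath.2
        subst ht
        simp [walkSign, Sym2.eq_swap, CharTwo.add_self_eq_zero]
      · have hcyc : (Walk.cons h t).IsCycle := (Walk.cons_isCycle_iff t h).2 ⟨hpath, hmem⟩
        have := hH _ (isCircuit_toSubgraph_of_isCycle hcyc)
        have h2 := negCount_eq_walkSign σ hcyc.isTrail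
        rw [(ZMod.natCast_eq_zero_iff_even).2 this] at h2
        simpa [walkSign] using h2.symm
    · rw [hcons, ← ih]
      simp [walkSign]

/-- Harary's theorem: a balanced signed graph is a switching of the all-positive one. -/
theorem IsBalancedGraph.exists_potential {H : SimpleGraph V} {σ : Sym2 V → Bool}
    (hH : IsBalancedGraph H σ) :
    ∃ f : V → ZMod 2, ∀ u v, H.Adj u v → edgeSign σ s(u, v) = f u + f v := by
  classical
  have hreach : ∀ v, H.Reachable (H.connectedComponentMk v).out v := fun v =>
    ConnectedComponent.exact (Quot.out_eq _)
  choose W _ using fun v => (hreach v).exists_isPath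
  refine ⟨fun v => walkSign σ (W v), fun u v huv => ?_⟩
  have hout : (H.connectedComponentMk u).out = (H.connectedComponentMk v).out := by
    rw [ConnectedComponent.sound huv.reachable]
  let w : H.Walk (H.connectedComponentMk v).out (H.connectedComponentMk v).out :=
    (((W u).copy hout rfl).append huv.toWalk).append (W v).reverse
  have hw : walkSign σ w = 0 := by
    rw [← hH.walkSign_bypass, (Walk.isPath_iff_nil.1 w.bypass_isPath).eq_nil]
    rfl
  have hw' : walkSign σ w = walkSign σ (W u) + edgeSign σ s(u, v) + walkSign σ (W v) := by
    simp only [w, walkSign_append, walkSign_reverse]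
    simp [walkSign]
  rw [hw] at hw'
  have key : ∀ a e b : ZMod 2, 0 = a + e + b → e = a + b := by decide
  exact key _ _ _ hw'

/-- The arc `[p.1, p.2)` of a cycle of length `n` contains the position `e < n`; positions are
taken modulo `n`, and arcs start below `n`. -/
def ArcCovers (n : ℕ) (p : ℕ × ℕ) (e : ℕ) : Prop :=
  (p.1 ≤ e ∧ e < p.2) ∨ (p.1 ≤ e + n ∧ e + n < p.2)

/-- An arc of a cycle of length `n`, shorter than the cycle, whose two ends are related by `R`
and have the same colour `q`. -/
structure IsGoodArc (n : ℕ) (q : ℕ → ZMod 2) (R : ℕ → ℕ → Prop) (p : ℕ × ℕ) : Prop where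
  fst_lt : p.1 < n
  lt : p.1 < p.2
  lt_add : p.2 < p.1 + n
  rel : R p.1 p.2
  color : q p.1 = q p.2

theorem card_filter_arcCovers {n : ℕ} {p : ℕ × ℕ} [DecidablePred (ArcCovers n p)] (h1 : p.1 < n)
    (h2 : p.1 < p.2) (h3 : p.2 < p.1 + n) :
    ((Finset.range n).filter (ArcCovers n p)).card = p.2 - p.1 := by
  have h : (Finset.range n).filter (ArcCovers n p) =
      Finset.Ico p.1 (min p.2 n) ∪ Finset.Ico 0 (p.2 - n) := by
    ext e
    simp only [Finset.mem_filter, Finset.mem_range, ArcCovers, Finset.mem_union, Finset.mem_Ico]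
    omega
  rw [h, Finset.card_union_of_disjoint]
  · simp only [Nat.card_Ico]
    omega
  · rw [Finset.disjoint_left]
    intro e
    simp only [Finset.mem_Ico]
    omega

theorem ZMod.two_eq_of_ne_of_ne {x y z : ZMod 2} (h : x ≠ y) (h' : y ≠ z) : x = z := by
  revert x y z; decide

theorem ZMod.two_add_one_ne (x : ZMod 2) : x + 1 ≠ x := by
  revert x; decide

theorem ZMod.two_eq_add_one_of_ne {x y : ZMod 2} (h : x ≠ y) : x = y + 1 := by
  revert x y; decide

section Arcs

variable {n : ℕ} {q : ℕ → ZMod 2} {R : ℕ → ℕ → Prop}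

/-- Two good arcs whose ends are all related lie in a common good arc, unless there are three
related positions with alternating colours. -/
theorem IsGoodArc.exists_union_of_le (hR : Equivalence R) (hRn : ∀ k, R k (k + n))
    (hq : ∀ k, q (k + n) = q k + 1)
    (hno : ∀ a b d, a < b → b < d → d < a + n → R a b → R b d → q a ≠ q b → q b ≠ q d → False)
    {x y : ℕ × ℕ} (hx : IsGoodArc n q R x) (hy : IsGoodArc n q R y) (hxy : R x.1 y.1)
    (hle : x.1 ≤ y.1) :
    ∃ z, IsGoodArc n q R z ∧ ∀ e < n, ArcCovers n x e ∨ ArcCovers n y e → ArcCovers n z e := by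
  obtain ⟨a, b⟩ := x
  obtain ⟨a', b'⟩ := y
  obtain ⟨x1, x2, x3, x4, x5⟩ := hx
  obtain ⟨y1, y2, y3, y4, y5⟩ := hy
  simp only at *
  have hab' : R a b' := hR.trans hxy y4
  by_cases hb : b' ≤ b
  · exact ⟨(a, b), ⟨x1, x2, x3, x4, x5⟩, fun e he h => by simp only [ArcCovers] at *; omega⟩
  push Not at hb
  by_cases hc : q a = q a'
  · by_cases hw : b' < a + n
    · exact ⟨(a, b'), ⟨x1, by omega, hw, hab', hc.trans y5⟩,
        fun e he h => by simp only [ArcCovers] at *; omega⟩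
    · exfalso
      have e1 : q b' = q (b' - n) + 1 := by rw [← hq, Nat.sub_add_cancel (by omega)]
      have hne : q a ≠ q (b' - n) := by
        rw [hc, y5, e1]
        exact ZMod.two_add_one_ne _
      have hne' : b' - n ≠ a := fun h => hne (by rw [h])
      have hr : R (b' - n) b' := by
        simpa [Nat.sub_add_cancel (show n ≤ b' by omega)] using hRn (b' - n)
      exact hno a (b' - n) a' (by omega) (by omega) (by omega) (hR.trans hab' (hR.symm hr))
        (hR.trans hr (hR.symm y4)) hne (by rw [← hc]; exact hne.symm)
  · have h1 : a < a' := lt_of_le_of_ne hle fun h => hc (by rw [h])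
    have h2 : a' ≠ b := fun h => hc (by rw [h, x5])
    by_cases h3 : a' < b
    · exact (hno a a' b h1 h3 x3 hxy (hR.trans (hR.symm hxy) x4) hc
        (by rw [← x5]; exact Ne.symm hc)).elim
    · by_cases h4 : b' ≤ b + n
      · refine ⟨(a', b + n), ⟨y1, by simp only; omega, by simp only; omega,
          hR.trans (hR.symm hxy) (hR.trans x4 (hRn b)), ?_⟩,
          fun e he h => by simp only [ArcCovers] at *; omega⟩
        simp only [hq, ← x5]
        exact ZMod.two_eq_add_one_of_ne (Ne.symm hc)
      · exact ⟨(a', b'), ⟨y1, y2, y3, y4, y5⟩,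
          fun e he h => by simp only [ArcCovers] at *; omega⟩

theorem IsGoodArc.exists_union (hR : Equivalence R) (hRn : ∀ k, R k (k + n))
    (hq : ∀ k, q (k + n) = q k + 1)
    (hno : ∀ a b d, a < b → b < d → d < a + n → R a b → R b d → q a ≠ q b → q b ≠ q d → False)
    {x y : ℕ × ℕ} (hx : IsGoodArc n q R x) (hy : IsGoodArc n q R y) (hxy : R x.1 y.1) :
    ∃ z, IsGoodArc n q R z ∧ ∀ e < n, ArcCovers n x e ∨ ArcCovers n y e → ArcCovers n z e := by
  rcases le_total x.1 y.1 with h | h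
  · exact hx.exists_union_of_le hR hRn hq hno hy hxy h
  · obtain ⟨z, hz, hz'⟩ := hy.exists_union_of_le hR hRn hq hno hx (hR.symm hxy) h
    exact ⟨z, hz, fun e he h => hz' e he h.symm⟩

/-- Among arcs through a common position, two already cover the union of all. -/
theorem exists_pair_cover_of_common {F : Finset (ℕ × ℕ)} {e₀ : ℕ}
    (hF : F.Nonempty) (hgood : ∀ p ∈ F, IsGoodArc n q R p) (hcov : ∀ p ∈ F, ArcCovers n p e₀) :
    ∃ x ∈ F, ∃ y ∈ F, ∀ z ∈ F, ∀ e < n, ArcCovers n z e → ArcCovers n x e ∨ ArcCovers n y e := by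
  classical
  let s : ℕ × ℕ → ℕ := fun p => if p.1 ≤ e₀ + n ∧ e₀ + n < p.2 then 0 else n
  obtain ⟨x, hx, hxm⟩ := F.exists_min_image (fun p => p.1 + s p) hF
  obtain ⟨y, hy, hym⟩ := F.exists_max_image (fun p => p.2 + s p) hF
  refine ⟨x, hx, y, hy, fun z hz e he h => ?_⟩
  have h1 := hxm z hz
  have h2 := hym z hz
  have cx := hcov x hx
  have cy := hcov y hy
  have cz := hcov z hz
  have gx := hgood x hx
  have gy := hgood y hy
  have gz := hgood z hz
  obtain ⟨x1, x2, x3, -, -⟩ := gx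
  obtain ⟨y1, y2, y3, -, -⟩ := gy
  obtain ⟨z1, z2, z3, -, -⟩ := gz
  simp only [ArcCovers, s] at *
  split_ifs at h1 h2 <;> omega

/-- A cover of a cycle of length `n` by good arcs can be thinned out so that distinct arcs have
unrelated ends and the total length is at most `2 n` minus the number of arcs. -/
theorem exists_thin_arc_cover (hR : Equivalence R) (hRn : ∀ k, R k (k + n))
    (hq : ∀ k, q (k + n) = q k + 1)
    (hno : ∀ a b d, a < b → b < d → d < a + n → R a b → R b d → q a ≠ q b → q b ≠ q d → False)
    (hcov : ∀ e < n, ∃ p, IsGoodArc n q R p ∧ ArcCovers n p e) :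
    ∃ A : Finset (ℕ × ℕ), (∀ p ∈ A, IsGoodArc n q R p) ∧
      (∀ e < n, ∃ p ∈ A, ArcCovers n p e) ∧
      (∀ x ∈ A, ∀ y ∈ A, x ≠ y → ¬ R x.1 y.1) ∧
      ∑ p ∈ A, (p.2 - p.1) + A.card ≤ 2 * n := by
  classical
  let U := (Finset.range n ×ˢ Finset.range (2 * n)).filter (IsGoodArc n q R)
  have hU : ∀ p, p ∈ U ↔ IsGoodArc n q R p := by
    intro p
    simp only [U, Finset.mem_filter, Finset.mem_product, Finset.mem_range, and_iff_right_iff_imp]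
    intro h
    have := h.fst_lt
    have := h.lt_add
    omega
  let K := U.powerset.filter fun A => ∀ e < n, ∃ p ∈ A, ArcCovers n p e
  have hK : K.Nonempty := by
    refine ⟨U, ?_⟩
    simp only [K, Finset.mem_filter, Finset.mem_powerset, Finset.Subset.refl, true_and]
    intro e he
    obtain ⟨p, hp, hpe⟩ := hcov e he
    exact ⟨p, (hU p).2 hp, hpe⟩
  obtain ⟨A, hA, hmin⟩ := K.exists_min_image Finset.card hK
  simp only [K, Finset.mem_filter, Finset.mem_powerset] at hA hmin
  obtain ⟨hAU, hAcov⟩ := hA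
  have hgood : ∀ p ∈ A, IsGoodArc n q R p := fun p hp => (hU p).1 (hAU hp)
  have hirr : ∀ z ∈ A, ∃ e < n, ∀ p ∈ A, ArcCovers n p e ↔ p = z := by
    intro z hz
    by_contra! hcon
    have hlt := Finset.card_erase_lt_of_mem hz
    refine absurd (hmin (A.erase z) ⟨(Finset.erase_subset _ _).trans hAU, fun e he => ?_⟩)
      (not_le.2 hlt)
    obtain ⟨p, hp, hpe⟩ := hAcov e he
    by_cases hpz : p = z
    · obtain ⟨p', hp', h⟩ := hcon e he
      subst hpz
      rcases h with ⟨h1, h2⟩ | ⟨h1, h2⟩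
      · exact ⟨p', Finset.mem_erase.2 ⟨h2, hp'⟩, h1⟩
      · exact absurd (h2 ▸ hpe) h1
    · exact ⟨p, Finset.mem_erase.2 ⟨hpz, hp⟩, hpe⟩
  refine ⟨A, hgood, hAcov, ?_, ?_⟩
  · intro x hx y hy hxy hrel
    obtain ⟨z, hz, hzc⟩ := (hgood x hx).exists_union hR hRn hq hno (hgood y hy) hrel
    have hy' : y ∈ A.erase x := Finset.mem_erase.2 ⟨hxy.symm, hy⟩
    have hlt : (insert z ((A.erase x).erase y)).card < A.card := by
      have h1 := Finset.card_insert_le z ((A.erase x).erase y)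
      have h2 := Finset.card_erase_lt_of_mem hx
      have h3 := Finset.card_erase_lt_of_mem hy'
      omega
    refine absurd (hmin _ ⟨?_, fun e he => ?_⟩) (not_le.2 hlt)
    · exact Finset.insert_subset ((hU z).2 hz)
        ((Finset.erase_subset _ _).trans ((Finset.erase_subset _ _).trans hAU))
    · obtain ⟨p, hp, hpe⟩ := hAcov e he
      by_cases hpx : p = x
      · exact ⟨z, Finset.mem_insert_self _ _, hzc e he (Or.inl (hpx ▸ hpe))⟩
      by_cases hpy : p = y
      · exact ⟨z, Finset.mem_insert_self _ _, hzc e he (Or.inr (hpy ▸ hpe))⟩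
      exact ⟨p, Finset.mem_insert_of_mem (Finset.mem_erase.2 ⟨hpy, Finset.mem_erase.2 ⟨hpx, hp⟩⟩),
        hpe⟩
  · have htwo : ∀ e < n, (A.filter fun p => ArcCovers n p e).card ≤ 2 := by
      intro e he
      by_contra! hcard
      have hne : (A.filter fun p => ArcCovers n p e).Nonempty :=
        Finset.card_pos.1 (by omega)
      obtain ⟨x, hx, y, hy, hxy⟩ := exists_pair_cover_of_common hne
        (fun p hp => hgood p (Finset.mem_filter.1 hp).1) (fun p hp => (Finset.mem_filter.1 hp).2)
      obtain ⟨z, hz, hzxy⟩ : ∃ z ∈ A.filter (fun p => ArcCovers n p e), z ∉ ({x, y} : Finset _) :=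
        Finset.exists_mem_notMem_of_card_lt_card (lt_of_le_of_lt Finset.card_le_two hcard)
      obtain ⟨e', he', hpriv⟩ := hirr z (Finset.mem_filter.1 hz).1
      have hze := (hpriv z (Finset.mem_filter.1 hz).1).2 rfl
      simp only [Finset.mem_insert, Finset.mem_singleton, not_or] at hzxy
      rcases hxy z hz e' he' hze with h | h
      · exact hzxy.1 ((hpriv x (Finset.mem_filter.1 hx).1).1 h).symm
      · exact hzxy.2 ((hpriv y (Finset.mem_filter.1 hy).1).1 h).symm
    choose! priv hprivlt hpriv using hirr
    have hlen : ∑ p ∈ A, (p.2 - p.1) =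
        ∑ e ∈ Finset.range n, (A.filter fun p => ArcCovers n p e).card := by
      rw [Finset.sum_congr rfl fun p hp => (card_filter_arcCovers (hgood p hp).fst_lt
        (hgood p hp).lt (hgood p hp).lt_add).symm]
      exact Finset.sum_card_bipartiteAbove_eq_sum_card_bipartiteBelow (ArcCovers n)
    have hcardA : A.card = ∑ e ∈ Finset.range n, (A.filter fun p => priv p = e).card :=
      Finset.card_eq_sum_card_fiberwise fun p hp => Finset.mem_coe.2 (Finset.mem_range.2 (hprivlt p hp))
    rw [hlen, hcardA, ← Finset.sum_add_distrib]
    have hbound : ∀ e ∈ Finset.range n, (A.filter fun p => ArcCovers n p e).card +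
        (A.filter fun p => priv p = e).card ≤ 2 := by
      intro e he
      rcases (A.filter fun p => priv p = e).eq_empty_or_nonempty with h | ⟨z, hz⟩
      · rw [h, Finset.card_empty]
        exact htwo e (Finset.mem_range.1 he)
      · obtain ⟨hzA, hze⟩ := Finset.mem_filter.1 hz
        have h1 : (A.filter fun p => ArcCovers n p e) ⊆ {z} := by
          intro p hp
          obtain ⟨hpA, hpe⟩ := Finset.mem_filter.1 hp
          exact Finset.mem_singleton.2 ((hpriv z hzA p hpA).1 (hze.symm ▸ hpe))
        have h2 : (A.filter fun p => priv p = e) ⊆ {z} := by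
          intro p hp
          obtain ⟨hpA, hpe⟩ := Finset.mem_filter.1 hp
          have := (hpriv p hpA p hpA).2 rfl
          rw [hpe, ← hze] at this
          exact Finset.mem_singleton.2 ((hpriv z hzA p hpA).1 this)
        have h3 := Finset.card_le_card h1
        have h4 := Finset.card_le_card h2
        rw [Finset.card_singleton] at h3 h4
        omega
    calc _ ≤ ∑ e ∈ Finset.range n, 2 := Finset.sum_le_sum hbound
      _ = 2 * n := by simp [mul_comm]

end Arcs

/-- `c` runs periodically around the circuit `C`, which has length `n`. -/
structure IsCyclicParam {G : SimpleGraph V} (C : G.Subgraph) (n : ℕ) (c : ℕ → V) : Prop where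
  three_le : 3 ≤ n
  periodic : ∀ k, c (k + n) = c k
  injOn : ∀ i < n, ∀ j < n, c i = c j → i = j
  mem_verts : ∀ x, x ∈ C.verts ↔ ∃ k < n, c k = x
  adj_iff : ∀ x y, C.Adj x y ↔ ∃ k < n, s(x, y) = s(c k, c (k + 1))

theorem IsCircuit.exists_isCyclicParam [Finite V] {G : SimpleGraph V} {C : G.Subgraph}
    (hC : IsCircuit G C) : ∃ (n : ℕ) (c : ℕ → V), IsCyclicParam C n c := by
  obtain ⟨u, w, hw, rfl⟩ := hC.exists_isCycle
  have h3 := hw.three_le_length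
  have hsucc : ∀ k < w.length, w.getVert ((k + 1) % w.length) = w.getVert (k + 1) := by
    intro k hk
    rcases Nat.lt_or_ge (k + 1) w.length with h | h
    · rw [Nat.mod_eq_of_lt h]
    · have : k + 1 = w.length := by omega
      rw [this, Nat.mod_self, w.getVert_zero, w.getVert_length]
  refine ⟨w.length, fun k => w.getVert (k % w.length), h3, by simp, ?_, ?_, ?_⟩
  · intro i hi j hj hij
    simp only [Nat.mod_eq_of_lt hi, Nat.mod_eq_of_lt hj] at hij
    exact hw.getVert_injOn' (by simp only [Set.mem_ofPred_eq]; omega)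
      (by simp only [Set.mem_ofPred_eq]; omega) hij
  · intro x
    rw [Walk.mem_verts_toSubgraph, Walk.mem_support_iff_exists_getVert]
    constructor
    · rintro ⟨k, rfl, hk⟩
      refine ⟨k % w.length, Nat.mod_lt _ (by omega), ?_⟩
      rcases Nat.lt_or_ge k w.length with h | h
      · simp [Nat.mod_eq_of_lt h]
      · have : k = w.length := by omega
        simp [this]
    · rintro ⟨k, hk, rfl⟩
      exact ⟨k % w.length, rfl, (Nat.mod_lt _ (by omega)).le⟩
  · intro x y
    rw [Walk.toSubgraph_adj_iff]
    constructor
    · rintro ⟨k, h, hk⟩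
      exact ⟨k, hk, by simp only [Nat.mod_eq_of_lt hk, hsucc k hk]; exact h.symm⟩
    · rintro ⟨k, hk, h⟩
      simp only [Nat.mod_eq_of_lt hk, hsucc k hk] at h
      exact ⟨k, h.symm, hk⟩

namespace IsCyclicParam

variable {G : SimpleGraph V} {C : G.Subgraph} {n : ℕ} {c : ℕ → V}

theorem apply_mod (h : IsCyclicParam C n c) (k : ℕ) : c (k % n) = c k :=
  Function.Periodic.map_mod_nat h.periodic k

theorem mod_eq (h : IsCyclicParam C n c) {i j : ℕ} (hij : c i = c j) : i % n = j % n := by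
  have hn : 0 < n := by have := h.three_le; omega
  refine h.injOn _ (Nat.mod_lt _ hn) _ (Nat.mod_lt _ hn) ?_
  rw [h.apply_mod, h.apply_mod, hij]

theorem eq_of_lt_add (h : IsCyclicParam C n c) {i j : ℕ} (hij : c i = c j) (h1 : i ≤ j)
    (h2 : j < i + n) : i = j := by
  have hmod : i ≡ j [MOD n] := h.mod_eq hij
  have := (Nat.modEq_iff_dvd' h1).1 hmod
  have := Nat.eq_zero_of_dvd_of_lt this (by omega)
  omega

theorem edge_mod (h : IsCyclicParam C n c) (k : ℕ) :
    s(c (k % n), c (k % n + 1)) = s(c k, c (k + 1)) := by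
  rw [h.apply_mod, ← h.apply_mod (k % n + 1), ← h.apply_mod (k + 1), Nat.mod_add_mod]

theorem adj_succ (h : IsCyclicParam C n c) (k : ℕ) : C.Adj (c k) (c (k + 1)) := by
  have hn : 0 < n := by have := h.three_le; omega
  exact (h.adj_iff _ _).2 ⟨k % n, Nat.mod_lt _ hn, (h.edge_mod k).symm⟩

theorem apply_mem (h : IsCyclicParam C n c) (k : ℕ) : c k ∈ C.verts :=
  C.edge_vert (h.adj_succ k)

theorem edge_eq (h : IsCyclicParam C n c) {i j : ℕ} (hi : i < n) (hj : j < n)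
    (hij : s(c i, c (i + 1)) = s(c j, c (j + 1))) : i = j := by
  have h3 := h.three_le
  rcases Sym2.eq_iff.1 hij with ⟨h1, -⟩ | ⟨h1, h2⟩
  · exact h.injOn i hi j hj h1
  · exfalso
    have e1 : i ≡ j + 1 [MOD n] := h.mod_eq h1
    have e2 : i + 1 ≡ j [MOD n] := h.mod_eq h2
    have e3 : j + 2 ≡ j [MOD n] := (e1.symm.add_right 1).trans e2
    have := (Nat.modEq_iff_dvd' (show j ≤ j + 2 by omega)).1 e3.symm
    have := Nat.le_of_dvd (by omega) this
    omega

theorem edgeSet_eq (h : IsCyclicParam C n c) :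
    C.edgeSet = (fun k => s(c k, c (k + 1))) '' (Set.Iio n) := by
  ext e
  induction e using Sym2.ind with
  | _ x y =>
    rw [Subgraph.mem_edgeSet, h.adj_iff]
    simp only [Set.mem_image, Set.mem_Iio, eq_comm]

theorem ncard_edgeSet (h : IsCyclicParam C n c) : C.edgeSet.ncard = n := by
  have hinj : Set.InjOn (fun k => s(c k, c (k + 1))) (Set.Iio n) :=
    fun i hi j hj hij => h.edge_eq hi hj hij
  rw [h.edgeSet_eq, hinj.ncard_image, Set.ncard_Iio_nat]

theorem ncard_verts (h : IsCyclicParam C n c) : C.verts.ncard = n := by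
  have : C.verts = c '' Set.Iio n := by
    ext x
    simp [h.mem_verts]
  have hinj : Set.InjOn c (Set.Iio n) := fun i hi j hj hij => h.injOn i hi j hj hij
  rw [this, hinj.ncard_image, Set.ncard_Iio_nat]

/-- The walk along the circuit from position `a` to position `a + d`. -/
theorem exists_arcWalk (h : IsCyclicParam C n c) (a d : ℕ) :
    ∃ p : G.Walk (c a) (c (a + d)),
      p.support = (List.range' a (d + 1)).map c ∧
      p.edges = (List.range' a d).map fun k => s(c k, c (k + 1)) := by
  induction d generalizing a with
  | zero => exact ⟨Walk.nil, by simp, by simp⟩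
  | succ d ih =>
    obtain ⟨p, hp, hp'⟩ := ih (a + 1)
    have hcast : c (a + 1 + d) = c (a + (d + 1)) := by congr 1; omega
    refine ⟨Walk.cons (h.adj_succ a).adj_sub (p.copy rfl hcast), ?_, ?_⟩
    · rw [Walk.support_cons, Walk.support_copy, hp, ← List.map_cons]
      rfl
    · rw [Walk.edges_cons, Walk.edges_copy, hp']
      rfl

end IsCyclicParam

theorem walkSign_arc {σ : Sym2 V → Bool} {c : ℕ → V} (a d : ℕ) :
    (((List.range' a d).map fun k => s(c k, c (k + 1))).map (edgeSign σ)).sum +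
      ∑ k ∈ Finset.range a, edgeSign σ s(c k, c (k + 1)) =
      ∑ k ∈ Finset.range (a + d), edgeSign σ s(c k, c (k + 1)) := by
  induction d generalizing a with
  | zero => simp
  | succ d ih =>
    rw [List.range'_succ, List.map_cons, List.map_cons, List.sum_cons,
      show a + (d + 1) = a + 1 + d by omega, ← ih (a + 1), Finset.sum_range_succ]
    ring

theorem ncard_edgeSet_toSubgraph {G : SimpleGraph V} {u v : V} {w : G.Walk u v} (hw : w.IsTrail) :
    w.toSubgraph.edgeSet.ncard = w.length := by
  classical
  have : w.toSubgraph.edgeSet = (w.edges.toFinset : Set (Sym2 V)) := by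
    ext e
    simp
  rw [this, Set.ncard_coe_finset, List.toFinset_card_of_nodup hw.edges_nodup, w.length_edges]

/-- In a cubic graph, a path avoiding the edges of a circuit meets it only at its ends. -/
theorem IsCubic.eq_end_of_mem_support [Finite V] {G : SimpleGraph V} (hG : IsCubic G)
    {C : G.Subgraph} (hC : IsCircuit G C) {u v x : V} {r : (G.deleteEdges C.edgeSet).Walk u v}
    (hr : r.IsPath) (hx : x ∈ r.support) (hxC : x ∈ C.verts) : x = u ∨ x = v := by
  by_contra! hne
  obtain ⟨i, rfl, hi⟩ := Walk.mem_support_iff_exists_getVert.1 hx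
  have hi0 : i ≠ 0 := by
    rintro rfl
    exact hne.1 r.getVert_zero
  have hil : i < r.length := lt_of_le_of_ne hi fun h => hne.2 (by rw [h, r.getVert_length])
  have h2 := hr.ncard_neighborSet_toSubgraph_internal_eq_two hi0 hil
  have hdisj : Disjoint (r.toSubgraph.neighborSet (r.getVert i)) (C.neighborSet (r.getVert i)) := by
    rw [Set.disjoint_left]
    intro y hy hy'
    have := r.toSubgraph.adj_sub hy
    rw [deleteEdges_adj] at this
    exact this.2 hy'
  have hsub : r.toSubgraph.neighborSet (r.getVert i) ∪ C.neighborSet (r.getVert i) ⊆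
      G.neighborSet (r.getVert i) := by
    rintro y (hy | hy)
    · exact (G.deleteEdges_le _) (r.toSubgraph.adj_sub hy)
    · exact C.adj_sub hy
  have := Set.ncard_le_ncard hsub (Set.toFinite _)
  rw [Set.ncard_union_eq hdisj (Set.toFinite _) (Set.toFinite _), h2, hC.2 _ hxC, hG] at this
  omega

/-- A balanced arc of the circuit and a path off the circuit with the same ends form a balanced
circuit. -/
theorem IsCyclicParam.exists_balancedCircuit [Finite V] {G : SimpleGraph V} (hG : IsCubic G)
    {σ : Sym2 V → Bool} {C : G.Subgraph} (hC : IsCircuit G C) {n : ℕ} {c : ℕ → V}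
    (hc : IsCyclicParam C n c) {f : V → ZMod 2}
    (hf : ∀ u v, (G.deleteEdges C.edgeSet).Adj u v → edgeSign σ s(u, v) = f u + f v)
    {a b : ℕ} (hab : a < b) (hba : b < a + n)
    (hcol : ∑ k ∈ Finset.range a, edgeSign σ s(c k, c (k + 1)) + f (c a) =
      ∑ k ∈ Finset.range b, edgeSign σ s(c k, c (k + 1)) + f (c b))
    {r : (G.deleteEdges C.edgeSet).Walk (c a) (c b)} (hr : r.IsPath) :
    ∃ D : G.Subgraph, IsBalancedCircuit G σ D ∧ D.edgeSet.ncard = (b - a) + r.length ∧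
      ∀ k, a ≤ k → k < b → s(c k, c (k + 1)) ∈ D.edgeSet := by
  obtain ⟨d, rfl⟩ := Nat.exists_eq_add_of_le hab.le
  obtain ⟨p, hps, hpe⟩ := hc.exists_arcWalk a d
  have hplen : p.length = d := by rw [← p.length_edges, hpe]; simp
  let r' : G.Walk (c (a + d)) (c a) := (r.mapLe (G.deleteEdges_le _)).reverse
  have hr' : r'.IsPath := (hr.mapLe _).reverse
  have hr's : ∀ x, x ∈ r'.support ↔ x ∈ r.support := fun x => by simp [r']
  have hr'e : ∀ e, e ∈ r'.edges ↔ e ∈ r.edges := fun e => by simp [r']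
  have hpp : p.IsPath := by
    rw [Walk.isPath_def, hps]
    refine List.Nodup.map_on (fun x hx y hy hxy => ?_) List.nodup_range'
    simp only [List.mem_range'_1] at hx hy
    rcases le_total x y with h | h
    · exact hc.eq_of_lt_add hxy h (by omega)
    · exact (hc.eq_of_lt_add hxy.symm h (by omega)).symm
  have hpC : ∀ x ∈ p.support, x ∈ C.verts := by
    intro x hx
    rw [hps] at hx
    obtain ⟨k, -, rfl⟩ := List.mem_map.1 hx
    exact hc.apply_mem k
  have hcyc : (p.append r').IsCycle := by
    rw [Walk.isCycle_def]
    refine ⟨(Walk.isTrail_append _ _).2 ⟨hpp.isTrail, hr'.isTrail, ?_⟩, ?_, ?_⟩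
    · intro e he he'
      rw [hpe] at he
      obtain ⟨k, -, rfl⟩ := List.mem_map.1 he
      have := r.edges_subset_edgeSet ((hr'e _).1 he')
      rw [edgeSet_deleteEdges] at this
      exact this.2 (hc.adj_succ k)
    · intro h
      have := congrArg Walk.length h
      rw [Walk.length_append, Walk.length_nil] at this
      omega
    · rw [Walk.tail_support_append]
      have hnd : ∀ {x y : V} {w : G.Walk x y}, w.IsPath → x ∉ w.support.tail := by
        intro x y w hw
        have := hw.support_nodup
        rw [← w.cons_tail_support] at this
        exact (List.nodup_cons.1 this).1
      refine List.Nodup.append hpp.support_nodup.tail hr'.support_nodup.tail ?_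
      intro x hx hx'
      rcases hG.eq_end_of_mem_support hC hr ((hr's x).1 (List.mem_of_mem_tail hx'))
        (hpC x (List.mem_of_mem_tail hx)) with rfl | rfl
      · exact hnd hpp hx
      · exact hnd hr' hx'
  refine ⟨(p.append r').toSubgraph, ⟨isCircuit_toSubgraph_of_isCycle hcyc, ?_⟩, ?_, ?_⟩
  · rw [← ZMod.natCast_eq_zero_iff_even, negCount_eq_walkSign σ hcyc.isTrail, walkSign_append,
      walkSign_eq_add_of_potential r' fun x y hxy =>
        hf x y (r.adj_of_mem_edges ((hr'e _).1 hxy))]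
    have harc := walkSign_arc (σ := σ) (c := c) a d
    rw [← hpe] at harc
    change walkSign σ p + _ = _ at harc
    rw [← harc] at hcol
    have key : ∀ s t x y : ZMod 2, s + x = t + s + y → t + (y + x) = 0 := by decide
    exact key _ _ _ _ hcol
  · rw [ncard_edgeSet_toSubgraph hcyc.isTrail, Walk.length_append, hplen]
    simp [r']
  · intro k hk hk'
    rw [Walk.mem_edges_toSubgraph, Walk.edges_append, List.mem_append, hpe]
    exact Or.inl (List.mem_map.2 ⟨k, List.mem_range'_1.2 ⟨hk, hk'⟩, rfl⟩)

/-- An edge whose switching class contains the signature negative exactly on that edge lies in no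
sign-circuit. -/
theorem IsSignCircuit.notMem_edgeSet_of_potential [Finite V] {G : SimpleGraph V}
    {σ : Sym2 V → Bool} {F : V → ZMod 2} {e₀ : Sym2 V} [DecidableEq (Sym2 V)]
    (hF : ∀ u v, G.Adj u v → edgeSign σ s(u, v) = F u + F v + if s(u, v) = e₀ then 1 else 0)
    {H : G.Subgraph} (hH : IsSignCircuit G σ H) : e₀ ∉ H.edgeSet := by
  have hwalk : ∀ {u v : V} (w : G.Walk u v),
      walkSign σ w = F u + F v + (w.edges.count e₀ : ZMod 2) := by
    intro u v w
    induction w with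
    | nil => simp [walkSign, CharTwo.add_self_eq_zero]
    | @cons x y z h p ih =>
      simp only [walkSign, Walk.edges_cons, List.map_cons, List.sum_cons, List.count_cons,
        beq_iff_eq] at ih ⊢
      rw [ih, hF x y h]
      push_cast
      linear_combination CharTwo.add_self_eq_zero (F y)
  have hcirc : ∀ {D : G.Subgraph}, IsCircuit G D → (Odd (negCount σ D.edgeSet) ↔ e₀ ∈ D.edgeSet) := by
    intro D hD
    obtain ⟨u, w, hw, rfl⟩ := hD.exists_isCycle
    rw [← ZMod.natCast_eq_one_iff_odd, negCount_eq_walkSign σ hw.isTrail, hwalk,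
      CharTwo.add_self_eq_zero, zero_add, Walk.mem_edges_toSubgraph]
    by_cases h : e₀ ∈ w.edges
    · rw [List.count_eq_one_of_mem hw.isTrail.edges_nodup h]
      simp [h]
    · rw [List.count_eq_zero_of_not_mem h]
      simp [h]
  rcases hH with ⟨h1, h2⟩ | ⟨C₁, C₂, P, u, v, h1, h2, -, -, -, -, -, -, h3, -⟩
  · rw [← hcirc h1]
    exact Nat.not_odd_iff_even.2 h2
  · have := (hcirc h1.1).1 h1.2
    have := (hcirc h2.1).1 h2.2
    exact absurd h3 (Set.nonempty_iff_ne_empty.1 ⟨e₀, by assumption, by assumption⟩)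

theorem SimpleGraph.Walk.IsPath.append_of_inter {H : SimpleGraph V} {u v w : V} {p : H.Walk u v}
    {q : H.Walk v w} (hp : p.IsPath) (hq : q.IsPath)
    (h : ∀ x ∈ p.support, x ∈ q.support → x = v) : (p.append q).IsPath := by
  rw [Walk.isPath_def, Walk.support_append]
  refine List.Nodup.append hp.support_nodup hq.support_nodup.tail fun x hx hx' => ?_
  obtain rfl := h x hx (List.mem_of_mem_tail hx')
  have := hq.support_nodup
  rw [← q.cons_tail_support] at this
  exact (List.nodup_cons.1 this).1 hx'

/-- A walk ending in `S` contains a path to its first vertex in `S`. -/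
theorem SimpleGraph.Walk.exists_isPath_first_mem {H : SimpleGraph V} {S : Set V} {u v : V}
    (w : H.Walk u v) (hv : v ∈ S) :
    ∃ x ∈ S, ∃ p : H.Walk u x, p.IsPath ∧ ∀ y ∈ p.support, y ∈ S → y = x := by
  classical
  suffices ∃ x ∈ S, ∃ p : H.Walk u x, ∀ y ∈ p.support, y ∈ S → y = x by
    obtain ⟨x, hx, p, hp⟩ := this
    exact ⟨x, hx, p.bypass, p.bypass_isPath,
      fun y hy => hp y (p.support_bypass_subset_support hy)⟩
  induction w with
  | nil => exact ⟨_, hv, Walk.nil, by simp⟩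
  | @cons a b d h w ih =>
    by_cases ha : a ∈ S
    · exact ⟨a, ha, Walk.nil, by simp⟩
    · obtain ⟨x, hx, p, hp⟩ := ih hv
      refine ⟨x, hx, Walk.cons h p, fun y hy hyS => ?_⟩
      rw [Walk.support_cons, List.mem_cons] at hy
      rcases hy with rfl | hy
      · exact absurd hyS ha
      · exact hp y hy hyS

/-- Three vertices of a connected graph are pairwise joined by the paths of a subtree, whose edges
are each used twice. -/
theorem SimpleGraph.Reachable.exists_tripod {H : SimpleGraph V} {a b d : V}
    (hab : H.Reachable a b) (had : H.Reachable a d) :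
    ∃ (p₁ : H.Walk a b) (p₂ : H.Walk a d) (p₃ : H.Walk d b) (T : Finset V),
      p₁.IsPath ∧ p₂.IsPath ∧ p₃.IsPath ∧
      (∀ x ∈ T, x ∈ p₁.support ∨ x ∈ p₂.support) ∧
      p₁.length + p₂.length + p₃.length + 2 = 2 * T.card := by
  classical
  obtain ⟨p, hp⟩ := hab.exists_isPath
  obtain ⟨w⟩ := had.symm
  obtain ⟨x, hx, r, hr, hrx⟩ := w.exists_isPath_first_mem (S := {y | y ∈ p.support})
    p.start_mem_support
  have hx' : x ∈ p.support := hx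
  have ht := hp.takeUntil hx'
  have hd := hp.dropUntil hx'
  have h2 : ((p.takeUntil x hx').append r.reverse).IsPath :=
    ht.append_of_inter hr.reverse fun y hy hy' =>
      hrx y (by simpa using hy') (p.support_takeUntil_subset_support hx' hy)
  have h3 : (r.append (p.dropUntil x hx')).IsPath :=
    hr.append_of_inter hd fun y hy hy' =>
      hrx y hy (p.support_dropUntil_subset_support hx' hy')
  refine ⟨p, _, _, p.support.toFinset ∪ r.support.toFinset, hp, h2, h3, ?_, ?_⟩
  · intro y hy
    rw [Finset.mem_union, List.mem_toFinset, List.mem_toFinset] at hy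
    rcases hy with hy | hy
    · exact Or.inl hy
    · right
      rw [Walk.mem_support_append_iff]
      exact Or.inr (by simpa using hy)
  · have hinter : p.support.toFinset ∩ r.support.toFinset = {x} := by
      ext y
      simp only [Finset.mem_inter, List.mem_toFinset, Finset.mem_singleton]
      constructor
      · rintro ⟨h, h'⟩
        exact hrx y h' h
      · rintro rfl
        exact ⟨hx', r.end_mem_support⟩
    have hcard := Finset.card_union_add_card_inter p.support.toFinset r.support.toFinset
    rw [hinter, Finset.card_singleton, List.toFinset_card_of_nodup hp.support_nodup,
      List.toFinset_card_of_nodup hr.support_nodup, p.length_support, r.length_support] at hcard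
    have hlen := congrArg Walk.length (p.take_spec hx')
    rw [Walk.length_append] at hlen
    rw [Walk.length_append, Walk.length_append, Walk.length_reverse]
    omega

theorem Nat.exists_mem_window_mod_eq {n : ℕ} (x e : ℕ) (he : e < n) :
    ∃ k, x ≤ k ∧ k < x + n ∧ k % n = e := by
  induction x with
  | zero => exact ⟨e, by omega, by omega, Nat.mod_eq_of_lt he⟩
  | succ x ih =>
    obtain ⟨k, h1, h2, h3⟩ := ih
    by_cases hk : k = x
    · exact ⟨k + n, by omega, by omega, by simpa using h3⟩
    · exact ⟨k, by omega, by omega, h3⟩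

theorem IsCubic.two_mul_ncard_edgeSet [Fintype V] {G : SimpleGraph V} (hG : IsCubic G) :
    2 * G.edgeSet.ncard = 3 * Fintype.card V := by
  classical
  have h := G.sum_degrees_eq_twice_card_edges
  have hdeg : ∀ v, G.degree v = 3 := by
    intro v
    rw [← hG v, Set.ncard_eq_toFinset_card', ← G.card_neighborFinset_eq_degree]
    rfl
  simp only [hdeg, Finset.sum_const, smul_eq_mul, Finset.card_univ] at h
  rw [← G.coe_edgeFinset, Set.ncard_coe_finset]
  omega

/-- The number of negative edges on the first `k` edges of a circuit, corrected by the switching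
`f`; it takes values modulo two. -/
def arcColor (σ : Sym2 V → Bool) (f : V → ZMod 2) (c : ℕ → V) (k : ℕ) : ZMod 2 :=
  ∑ i ∈ Finset.range k, edgeSign σ s(c i, c (i + 1)) + f (c k)

theorem edgeSign_eq_arcColor (σ : Sym2 V → Bool) (f : V → ZMod 2) (c : ℕ → V) (k : ℕ) :
    edgeSign σ s(c k, c (k + 1)) =
      f (c k) + f (c (k + 1)) + (arcColor σ f c k + arcColor σ f c (k + 1)) := by
  rw [arcColor, arcColor, Finset.sum_range_succ]
  have key : ∀ e x y s : ZMod 2, e = x + y + (s + x + (s + e + y)) := by decide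
  exact key _ _ _ _

section UnbalancedCircuit

variable {G : SimpleGraph V} {σ : Sym2 V → Bool} {C : G.Subgraph} {n : ℕ} {c : ℕ → V}
  {f : V → ZMod 2}

theorem IsCyclicParam.sum_edgeSign (hc : IsCyclicParam C n c) (σ : Sym2 V → Bool) :
    ∑ i ∈ Finset.range n, edgeSign σ s(c i, c (i + 1)) = (negCount σ C.edgeSet : ZMod 2) := by
  classical
  have hset : C.edgeSet ∩ {e | σ e = true} = ((((Finset.range n).image fun k =>
      s(c k, c (k + 1))).filter fun e => σ e = true : Finset (Sym2 V)) : Set (Sym2 V)) := by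
    rw [hc.edgeSet_eq]
    ext e
    simp
  rw [negCount, hset, Set.ncard_coe_finset, Finset.card_filter, Finset.sum_image
    fun i hi j hj hij => hc.edge_eq (by simpa using hi) (by simpa using hj) hij]
  push_cast
  rfl

theorem IsUnbalancedCircuit.arcColor_add (hC : IsUnbalancedCircuit G σ C)
    (hc : IsCyclicParam C n c) (k : ℕ) : arcColor σ f c (k + n) = arcColor σ f c k + 1 := by
  have hsum : ∑ i ∈ Finset.range (k + n), edgeSign σ s(c i, c (i + 1)) =
      ∑ i ∈ Finset.range k, edgeSign σ s(c i, c (i + 1)) + 1 := by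
    induction k with
    | zero => simp [hc.sum_edgeSign, (ZMod.natCast_eq_one_iff_odd).2 hC.2]
    | succ k ih =>
      rw [show k + 1 + n = k + n + 1 by omega, Finset.sum_range_succ, Finset.sum_range_succ, ih,
        hc.periodic, show k + n + 1 = k + 1 + n by omega, hc.periodic]
      ring
  rw [arcColor, arcColor, hsum, hc.periodic]
  ring

/-- In a flow-admissible graph every edge of `C` lies on a balanced arc whose ends are joined off
the circuit. -/
theorem FlowAdmissible.exists_isGoodArc [Finite V] (hfa : FlowAdmissible G σ)
    (hC : IsUnbalancedCircuit G σ C) (hc : IsCyclicParam C n c)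
    (hf : ∀ u v, (G.deleteEdges C.edgeSet).Adj u v → edgeSign σ s(u, v) = f u + f v)
    {e : ℕ} (he : e < n) :
    ∃ p, IsGoodArc n (arcColor σ f c)
      (fun i j => (G.deleteEdges C.edgeSet).Reachable (c i) (c j)) p ∧ ArcCovers n p e := by
  classical
  by_contra! hcon
  set q := arcColor σ f c with hqdef
  have hq : ∀ k, q (k + n) = q k + 1 := hC.arcColor_add hc
  have hlt : ∀ i j, e < i → i < j → j ≤ e + n →
      (G.deleteEdges C.edgeSet).Reachable (c i) (c j) → q i = q j := by
    intro i j hi hij hj hr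
    by_contra hne
    by_cases hjn : j < n
    · refine hcon (j, i + n) ⟨hjn, by simp only; omega, by simp only; omega, ?_, ?_⟩
        (by simp only [ArcCovers]; omega)
      · simp only [hc.periodic]
        exact hr.symm
      · simp only [hq]
        exact ZMod.two_eq_add_one_of_ne (Ne.symm hne)
    · obtain ⟨m, rfl⟩ := Nat.exists_eq_add_of_le' (not_lt.1 hjn)
      refine hcon (m, i) ⟨by simp only; omega, by simp only; omega, by simp only; omega, ?_, ?_⟩
        (by simp only [ArcCovers]; omega)
      · rw [hc.periodic] at hr
        exact hr.symm
      · rw [hq] at hne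
        have key : ∀ x y : ZMod 2, x ≠ y + 1 → y = x := by decide
        exact key _ _ hne
  have hconst : ∀ i j, e < i → i ≤ e + n → e < j → j ≤ e + n →
      (G.deleteEdges C.edgeSet).Reachable (c i) (c j) → q i = q j := by
    intro i j hi hi' hj hj' hr
    rcases lt_trichotomy i j with h | rfl | h
    · exact hlt i j hi h hj' hr
    · rfl
    · exact (hlt j i hj h hi' hr.symm).symm
  let g : V → ZMod 2 := fun x =>
    if h : ∃ i, e < i ∧ i ≤ e + n ∧ (G.deleteEdges C.edgeSet).Reachable (c i) x then q h.choose
    else 0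
  have hg : ∀ i x, e < i → i ≤ e + n → (G.deleteEdges C.edgeSet).Reachable (c i) x →
      g x = q i := by
    intro i x hi hi' hr
    have h : ∃ i, e < i ∧ i ≤ e + n ∧ (G.deleteEdges C.edgeSet).Reachable (c i) x :=
      ⟨i, hi, hi', hr⟩
    have hg' : g x = q h.choose := dif_pos h
    obtain ⟨h1, h2, h3⟩ := h.choose_spec
    rw [hg']
    exact hconst _ _ h1 h2 hi hi' (h3.trans hr.symm)
  have hgadj : ∀ u v, (G.deleteEdges C.edgeSet).Adj u v → g u = g v := by
    intro u v huv
    by_cases h : ∃ i, e < i ∧ i ≤ e + n ∧ (G.deleteEdges C.edgeSet).Reachable (c i) u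
    · obtain ⟨i, h1, h2, h3⟩ := h
      rw [hg i u h1 h2 h3, hg i v h1 h2 (h3.trans huv.reachable)]
    · have h' : ¬ ∃ i, e < i ∧ i ≤ e + n ∧ (G.deleteEdges C.edgeSet).Reachable (c i) v :=
        fun ⟨i, h1, h2, h3⟩ => h ⟨i, h1, h2, h3.trans huv.symm.reachable⟩
      simp only [g, dif_neg h, dif_neg h']
  have hgC : ∀ k < n, q k + q (k + 1) =
      g (c k) + g (c (k + 1)) + if k = e then 1 else 0 := by
    intro k hk
    have hgw : ∀ i, e < i → i ≤ e + n → g (c i) = q i := fun i h1 h2 => hg i _ h1 h2 (.refl _)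
    rcases lt_trichotomy k e with h | rfl | h
    · have h1 := hgw (k + n) (by omega) (by omega)
      have h2 := hgw (k + 1 + n) (by omega) (by omega)
      rw [hc.periodic, hq] at h1 h2
      rw [h1, h2, if_neg h.ne]
      have key : ∀ x y : ZMod 2, x + y = x + 1 + (y + 1) + 0 := by decide
      exact key _ _
    · have h1 := hgw (k + n) (by omega) (by omega)
      have h2 := hgw (k + 1) (by omega) (by omega)
      rw [hc.periodic, hq] at h1
      rw [h1, h2, if_pos rfl]
      have key : ∀ x y : ZMod 2, x + y = x + 1 + y + 1 := by decide
      exact key _ _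
    · rw [hgw k h (by omega), hgw (k + 1) (by omega) (by omega), if_neg h.ne', add_zero]
  have hF : ∀ u v, G.Adj u v → edgeSign σ s(u, v) = (f u + g u) + (f v + g v) +
      if s(u, v) = s(c e, c (e + 1)) then 1 else 0 := by
    intro u v huv
    by_cases hCuv : C.Adj u v
    · obtain ⟨k, hk, hke⟩ := (hc.adj_iff u v).1 hCuv
      have hif : (if s(u, v) = s(c e, c (e + 1)) then 1 else 0 : ZMod 2) =
          if k = e then 1 else 0 := by
        rw [hke]
        exact if_congr ⟨fun h => hc.edge_eq hk he h, fun h => by rw [h]⟩ rfl rfl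
      rw [hif, hke, edgeSign_eq_arcColor σ f c k, ← hqdef, hgC k hk]
      rcases Sym2.eq_iff.1 hke with ⟨rfl, rfl⟩ | ⟨rfl, rfl⟩ <;> ring
    · have hadj : (G.deleteEdges C.edgeSet).Adj u v := by
        rw [deleteEdges_adj]
        exact ⟨huv, hCuv⟩
      have hne : s(u, v) ≠ s(c e, c (e + 1)) := by
        intro h
        exact hCuv ((hc.adj_iff u v).2 ⟨e, he, h⟩)
      rw [if_neg hne, hf u v hadj, hgadj u v hadj]
      have key : ∀ x y z : ZMod 2, x + y = x + z + (y + z) + 0 := by decide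
      exact key _ _ _
  obtain ⟨H, hH, hHe⟩ := hfa s(c e, c (e + 1)) (hc.adj_succ e).adj_sub
  exact hH.notMem_edgeSet_of_potential (F := fun x => f x + g x) hF hHe

theorem IsCyclicParam.covers_pair (hc : IsCyclicParam C n c) {D D' : G.Subgraph} (x : ℕ)
    (h : ∀ k, x ≤ k → k < x + n →
      s(c k, c (k + 1)) ∈ D.edgeSet ∨ s(c k, c (k + 1)) ∈ D'.edgeSet) :
    Covers G {D, D'} C.edgeSet := by
  intro e he
  rw [hc.edgeSet_eq] at he
  obtain ⟨i, hi, rfl⟩ := he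
  obtain ⟨k, h1, h2, rfl⟩ := Nat.exists_mem_window_mod_eq x i hi
  simp only [hc.edge_mod]
  rcases h k h1 h2 with h | h
  · exact ⟨D, by simp, h⟩
  · exact ⟨D', by simp, h⟩

/-- Three positions joined off the circuit and cutting it into unbalanced arcs give a cover by two
balanced circuits. -/
theorem IsUnbalancedCircuit.exists_cover_of_triple [Fintype V] (hcubic : IsCubic G)
    (hC : IsUnbalancedCircuit G σ C) (hc : IsCyclicParam C n c)
    (hf : ∀ u v, (G.deleteEdges C.edgeSet).Adj u v → edgeSign σ s(u, v) = f u + f v)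
    {a b d : ℕ} (hab : a < b) (hbd : b < d) (hda : d < a + n)
    (hrab : (G.deleteEdges C.edgeSet).Reachable (c a) (c b))
    (hrbd : (G.deleteEdges C.edgeSet).Reachable (c b) (c d))
    (hqab : arcColor σ f c a ≠ arcColor σ f c b) (hqbd : arcColor σ f c b ≠ arcColor σ f c d) :
    ∃ 𝓕 : Multiset G.Subgraph, (∀ H ∈ 𝓕, IsSignCircuit G σ H) ∧
      Covers G 𝓕 C.edgeSet ∧
      3 * coverLength G 𝓕 ≤ 4 * n + 4 * (C.vertsᶜ.ncard + 2) := by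
  classical
  have hq : ∀ k, arcColor σ f c (k + n) = arcColor σ f c k + 1 := hC.arcColor_add hc
  obtain ⟨p₁, p₂, p₃, T, hp₁, hp₂, hp₃, hT, hlen⟩ := hrab.exists_tripod (hrab.trans hrbd)
  obtain ⟨D₁, hD₁, hl₁, hk₁⟩ := hc.exists_balancedCircuit hcubic hC.1 hf
    (hab.trans hbd) hda (ZMod.two_eq_of_ne_of_ne hqab hqbd) hp₂
  obtain ⟨D₂, hD₂, hl₂, hk₂⟩ := hc.exists_balancedCircuit hcubic hC.1 hf
    (a := b) (b := a + n) (by omega) (by omega)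
    ((ZMod.two_eq_add_one_of_ne hqab.symm).trans (hq a).symm)
    (r := p₁.reverse.copy rfl (hc.periodic a).symm) (by simpa using hp₁)
  obtain ⟨D₃, hD₃, hl₃, hk₃⟩ := hc.exists_balancedCircuit hcubic hC.1 hf
    (a := d) (b := b + n) (by omega) (by omega)
    ((ZMod.two_eq_add_one_of_ne hqbd.symm).trans (hq b).symm)
    (r := p₃.copy rfl (hc.periodic b).symm) (by simpa using hp₃)
  rw [Walk.length_copy] at hl₂ hl₃
  rw [Walk.length_reverse] at hl₂
  have hTcard : T.card ≤ C.vertsᶜ.ncard + 3 := by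
    have hsub : (T : Set V) ⊆ C.vertsᶜ ∪ (({c a, c b, c d} : Finset V) : Set V) := by
      intro x hx
      by_cases hxC : x ∈ C.verts
      · right
        rcases hT x hx with h | h
        · rcases hcubic.eq_end_of_mem_support hC.1 hp₁ h hxC with rfl | rfl <;> simp
        · rcases hcubic.eq_end_of_mem_support hC.1 hp₂ h hxC with rfl | rfl <;> simp
      · exact Or.inl hxC
    have h1 := Set.ncard_le_ncard hsub (Set.toFinite _)
    have h2 := Set.ncard_union_le C.vertsᶜ (({c a, c b, c d} : Finset V) : Set V)
    have h3 : ({c a, c b, c d} : Finset V).card ≤ 3 := Finset.card_le_three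
    rw [Set.ncard_coe_finset] at h1 h2
    omega
  have hpair : ∀ D D' : G.Subgraph, IsBalancedCircuit G σ D → IsBalancedCircuit G σ D' →
      ∀ x, (∀ k, x ≤ k → k < x + n →
        s(c k, c (k + 1)) ∈ D.edgeSet ∨ s(c k, c (k + 1)) ∈ D'.edgeSet) →
      3 * (D.edgeSet.ncard + D'.edgeSet.ncard) ≤ 4 * n + 4 * (C.vertsᶜ.ncard + 2) →
      ∃ 𝓕 : Multiset G.Subgraph, (∀ H ∈ 𝓕, IsSignCircuit G σ H) ∧
        Covers G 𝓕 C.edgeSet ∧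
        3 * coverLength G 𝓕 ≤ 4 * n + 4 * (C.vertsᶜ.ncard + 2) := by
    intro D D' hD hD' x hx hle
    refine ⟨{D, D'}, ?_, hc.covers_pair x hx, by simpa [coverLength] using hle⟩
    intro H hH
    simp only [Multiset.insert_eq_cons, Multiset.mem_cons, Multiset.mem_singleton] at hH
    rcases hH with rfl | rfl
    · exact Or.inl hD
    · exact Or.inl hD'
  by_cases h12 : 3 * (D₁.edgeSet.ncard + D₂.edgeSet.ncard) ≤ 4 * n + 4 * (C.vertsᶜ.ncard + 2)
  · refine hpair D₁ D₂ hD₁ hD₂ a (fun k h1 h2 => ?_) h12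
    rcases Nat.lt_or_ge k d with h | h
    · exact Or.inl (hk₁ k h1 h)
    · exact Or.inr (hk₂ k (by omega) h2)
  by_cases h23 : 3 * (D₂.edgeSet.ncard + D₃.edgeSet.ncard) ≤ 4 * n + 4 * (C.vertsᶜ.ncard + 2)
  · refine hpair D₂ D₃ hD₂ hD₃ b (fun k h1 h2 => ?_) h23
    rcases Nat.lt_or_ge k d with h | h
    · exact Or.inl (hk₂ k h1 (by omega))
    · exact Or.inr (hk₃ k h h2)
  · refine hpair D₁ D₃ hD₁ hD₃ a (fun k h1 h2 => ?_) (by omega)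
    rcases Nat.lt_or_ge k d with h | h
    · exact Or.inl (hk₁ k h1 h)
    · exact Or.inr (hk₃ k h (by omega))

/-- A thin cover of the circuit by good arcs yields a cover by balanced circuits, whose paths off
the circuit are disjoint. -/
theorem IsUnbalancedCircuit.exists_cover_of_forall_not_triple [Fintype V] (hcubic : IsCubic G)
    (hfa : FlowAdmissible G σ) (hC : IsUnbalancedCircuit G σ C) (hc : IsCyclicParam C n c)
    (hf : ∀ u v, (G.deleteEdges C.edgeSet).Adj u v → edgeSign σ s(u, v) = f u + f v)
    (hno : ∀ a b d, a < b → b < d → d < a + n →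
      (G.deleteEdges C.edgeSet).Reachable (c a) (c b) →
      (G.deleteEdges C.edgeSet).Reachable (c b) (c d) →
      arcColor σ f c a ≠ arcColor σ f c b → arcColor σ f c b ≠ arcColor σ f c d → False) :
    ∃ 𝓕 : Multiset G.Subgraph, (∀ H ∈ 𝓕, IsSignCircuit G σ H) ∧
      Covers G 𝓕 C.edgeSet ∧ coverLength G 𝓕 ≤ 2 * n + C.vertsᶜ.ncard := by
  classical
  obtain ⟨A, hgood, hcov, hrel, hsum⟩ := exists_thin_arc_cover (n := n) (q := arcColor σ f c)
    (R := fun i j => (G.deleteEdges C.edgeSet).Reachable (c i) (c j))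
    ⟨fun _ => .refl _, fun h => h.symm, fun h h' => h.trans h'⟩
    (fun k => by simp only [hc.periodic]; exact .refl _) (hC.arcColor_add hc) hno
    (fun e he => hfa.exists_isGoodArc hC hc hf he)
  have hcirc : ∀ p ∈ A, ∃ (D : G.Subgraph) (I : Finset V), IsBalancedCircuit G σ D ∧
      D.edgeSet.ncard ≤ (p.2 - p.1) + (I.card + 1) ∧
      (∀ k, p.1 ≤ k → k < p.2 → s(c k, c (k + 1)) ∈ D.edgeSet) ∧
      ∀ x ∈ I, x ∉ C.verts ∧ (G.deleteEdges C.edgeSet).Reachable (c p.1) x := by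
    intro p hp
    obtain ⟨-, h1, h2, h3, h4⟩ := hgood p hp
    obtain ⟨r, hr⟩ := h3.exists_isPath
    obtain ⟨D, hD, hl, hk⟩ := hc.exists_balancedCircuit hcubic hC.1 hf h1 h2 h4 hr
    refine ⟨D, r.support.toFinset.filter (· ∉ C.verts), hD, ?_, hk, ?_⟩
    · have hsplit := Finset.card_filter_add_card_filter_not (s := r.support.toFinset)
        (fun x => x ∈ C.verts)
      rw [List.toFinset_card_of_nodup hr.support_nodup, r.length_support] at hsplit
      have hsub : r.support.toFinset.filter (fun x => x ∈ C.verts) ⊆ {c p.1, c p.2} := by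
        intro x hx
        obtain ⟨hx, hxC⟩ := Finset.mem_filter.1 hx
        have := hcubic.eq_end_of_mem_support hC.1 hr (List.mem_toFinset.1 hx) hxC
        simpa using this
      have hle := (Finset.card_le_card hsub).trans Finset.card_le_two
      omega
    · intro x hx
      obtain ⟨hx, hxC⟩ := Finset.mem_filter.1 hx
      exact ⟨hxC, (r.takeUntil x (List.mem_toFinset.1 hx)).reachable⟩
  choose! D I hD hl hk hI using hcirc
  have hdisj : (A : Set (ℕ × ℕ)).PairwiseDisjoint I := by
    intro x hx y hy hxy
    rw [Function.onFun, Finset.disjoint_left]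
    intro v hvx hvy
    exact hrel x hx y hy hxy ((hI x hx v hvx).2.trans (hI y hy v hvy).2.symm)
  have hIsum : ∑ p ∈ A, (I p).card ≤ C.vertsᶜ.ncard := by
    rw [← Finset.card_biUnion hdisj, ← Set.ncard_coe_finset]
    refine Set.ncard_le_ncard (fun v hv => ?_) (Set.toFinite _)
    obtain ⟨p, hp, hv⟩ := Finset.mem_biUnion.1 (Finset.mem_coe.1 hv)
    exact (hI p hp v hv).1
  refine ⟨A.val.map D, ?_, ?_, ?_⟩
  · intro H hH
    obtain ⟨p, hp, rfl⟩ := Multiset.mem_map.1 hH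
    exact Or.inl (hD p hp)
  · intro e he
    rw [hc.edgeSet_eq] at he
    obtain ⟨i, hi, rfl⟩ := he
    obtain ⟨p, hp, hpi⟩ := hcov i hi
    refine ⟨D p, Multiset.mem_map_of_mem D hp, ?_⟩
    rcases hpi with ⟨h1, h2⟩ | ⟨h1, h2⟩
    · exact hk p hp i h1 h2
    · have := hk p hp (i + n) h1 h2
      rwa [hc.periodic, show i + n + 1 = i + 1 + n by omega, hc.periodic] at this
  · calc coverLength G (A.val.map D) = ∑ p ∈ A, (D p).edgeSet.ncard := by
          rw [coverLength, Multiset.map_map]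
          rfl
      _ ≤ ∑ p ∈ A, ((p.2 - p.1) + ((I p).card + 1)) := Finset.sum_le_sum hl
      _ = ∑ p ∈ A, (p.2 - p.1) + A.card + ∑ p ∈ A, (I p).card := by
          rw [Finset.sum_add_distrib, Finset.sum_add_distrib, Finset.card_eq_sum_ones]
          ring
      _ ≤ 2 * n + C.vertsᶜ.ncard := Nat.add_le_add hsum hIsum

end UnbalancedCircuit

/-- Lemma 2.7. If `C` is an unbalanced circuit of a flow-admissible
cubic signed graph `(G,σ)` and `G − E(C)` is balanced, then `C` can be covered by
sign-circuits of total length at most `(8/9)|E(G)| + |E(C)|`. -/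
theorem stmt3 {V : Type*} [Fintype V] (G : SimpleGraph V) (σ : Sym2 V → Bool)
    (hcubic : IsCubic G) (hfa : FlowAdmissible G σ)
    (C : G.Subgraph) (hC : IsUnbalancedCircuit G σ C)
    (hbal : IsBalancedGraph (G.deleteEdges C.edgeSet) σ) :
    ∃ 𝓕 : Multiset G.Subgraph, (∀ H ∈ 𝓕, IsSignCircuit G σ H) ∧
      Covers G 𝓕 C.edgeSet ∧
      9 * coverLength G 𝓕 ≤ 8 * G.edgeSet.ncard + 9 * C.edgeSet.ncard := by
  classical
  obtain ⟨n, c, hc⟩ := hC.1.exists_isCyclicParam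
  obtain ⟨f, hf⟩ := hbal.exists_potential
  have hE := hcubic.two_mul_ncard_edgeSet
  have hV := Set.ncard_add_ncard_compl C.verts
  rw [hc.ncard_verts, Nat.card_eq_fintype_card] at hV
  have hn := hc.three_le
  by_cases htriple : ∃ a b d, a < b ∧ b < d ∧ d < a + n ∧
      (G.deleteEdges C.edgeSet).Reachable (c a) (c b) ∧
      (G.deleteEdges C.edgeSet).Reachable (c b) (c d) ∧
      arcColor σ f c a ≠ arcColor σ f c b ∧ arcColor σ f c b ≠ arcColor σ f c d
  · obtain ⟨a, b, d, hab, hbd, hda, h1, h2, h3, h4⟩ := htriple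
    obtain ⟨𝓕, h𝓕, hcov, hlen⟩ :=
      hC.exists_cover_of_triple hcubic hc hf hab hbd hda h1 h2 h3 h4
    refine ⟨𝓕, h𝓕, hcov, ?_⟩
    rw [hc.ncard_edgeSet]
    omega
  · obtain ⟨𝓕, h𝓕, hcov, hlen⟩ :=
      hC.exists_cover_of_forall_not_triple hcubic hfa hc hf fun a b d hab hbd hda h1 h2 h3 h4 =>
        htriple ⟨a, b, d, hab, hbd, hda, h1, h2, h3, h4⟩
    refine ⟨𝓕, h𝓕, hcov, ?_⟩
    rw [hc.ncard_edgeSet]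
    omega
end
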